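/- arXiv:math/0302349 — 5 statements merged into one kernel-verified Lean document; each statement's English description precedes it below -/
import Mathlib

section
/- Let T ∈ (0,∞], let Ψ : [0,∞) → ℝ be continuous and strictly increasing with Ψ(0) = 0 and Ψ smooth on (0,∞). Let w : [0,1] × (0,T) → [0,∞) be continuous with w(0,t) = w(1,t) = 0 for all t, w > 0 and smooth on (0,1) × (0,T), bounded on [0,1] × [s,T) for each 0 < s < T, solving ∂_t w = ∂_u²(Ψ(w)) on (0,1) × (0,T), and such that ∫₀¹ w(u,t) du → 0 as t → T. Let z : (0,1) × (0,T) → ℝ be smooth with ∂_u z = w and ∂_t z = ∂_u(Ψ(w)), and suppose a ≤ z(u,t) ≤ b for all (u,t). Then for each t ∈ (0,T) the limits l(t) = lim_{u→0⁺} z(u,t) and r(t) = lim_{u→1⁻} z(u,t) exist, the curves l and r are continuous on (0,T) and satisfy a ≤ l(t) < r(t) ≤ b, l(t) is nondecreasing, r(t) is nonincreasing, and r(t) − l(t) → 0 as t → T. -/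
open Set Filter Topology

/-- The filter of real times `t` approaching the horizon `T ∈ (0,∞]` from below:
for finite `T` this is `𝓝[<] T`, and for `T = ∞` it is `atTop`. -/
noncomputable def approachesHorizon (T : EReal) : Filter ℝ :=
  Filter.comap (fun t : ℝ => (t : EReal)) (nhdsWithin T (Set.Iio T))

/-- The open time interval `(0,T)` for a horizon `T ∈ (0,∞]`. -/
def timeInterval (T : EReal) : Set ℝ :=
  {t : ℝ | 0 < t ∧ (t : EReal) < T}

theorem icmc_key {t1 t2 l1 l2 : ℝ} (ht : t1 < t2) (z D P : ℝ → ℝ → ℝ)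
    (hzc : ∀ t ∈ Icc t1 t2, ContinuousOn (fun u => z u t) (Ioo 0 1))
    (hD : ContinuousOn (fun p : ℝ × ℝ => D p.1 p.2) (Ioo 0 1 ×ˢ Icc t1 t2))
    (hzD : ∀ u ∈ Ioo (0:ℝ) 1, ∀ t ∈ Icc t1 t2, HasDerivAt (fun s => z u s) (D u t) t)
    (hPD : ∀ u ∈ Ioo (0:ℝ) 1, ∀ t ∈ Icc t1 t2, HasDerivAt (fun p => P p t) (D u t) u)
    (hPc : ContinuousOn (fun p : ℝ × ℝ => P p.1 p.2) (Icc 0 1 ×ˢ Icc t1 t2))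
    (hP0 : ∀ t ∈ Icc t1 t2, P 0 t = 0)
    (hPnn : ∀ u ∈ Icc (0:ℝ) 1, ∀ t ∈ Icc t1 t2, 0 ≤ P u t)
    (h1 : Tendsto (fun u => z u t1) (𝓝[>] 0) (𝓝 l1))
    (h2 : Tendsto (fun u => z u t2) (𝓝[>] 0) (𝓝 l2)) : l1 ≤ l2 := by
  by_contra hlt
  push Not at hlt
  set c := (l1 - l2) / 2 with hc
  have hcpos : 0 < c := by rw [hc]; linarith
  have ht1 : t1 ∈ Icc t1 t2 := ⟨le_rfl, ht.le⟩
  have ht2 : t2 ∈ Icc t1 t2 := ⟨ht.le, le_rfl⟩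
  have hev : ∀ᶠ u in 𝓝[>] (0:ℝ), z u t2 - z u t1 < -c :=
    (h2.sub h1).eventually (gt_mem_nhds (by rw [hc]; linarith))
  obtain ⟨h0, hh0, hsub⟩ := mem_nhdsGT_iff_exists_Ioo_subset.1 hev
  have hh0' : (0:ℝ) < h0 := hh0
  set h := min h0 1 / 2 with hh
  have hm : 0 < min h0 1 := lt_min hh0' one_pos
  have hhpos : 0 < h := by rw [hh]; linarith
  have hhlt0 : h < h0 := by rw [hh]; linarith [min_le_left h0 1]
  have hhlt1 : h < 1 := by rw [hh]; linarith [min_le_right h0 1]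
  set ε := c * h / (4 * (t2 - t1)) with hε
  have htp : 0 < t2 - t1 := by linarith
  have hεpos : 0 < ε := by positivity
  have huc := (isCompact_Icc.prod isCompact_Icc).uniformContinuousOn_of_continuous hPc
  rw [Metric.uniformContinuousOn_iff] at huc
  obtain ⟨d, hd, hud⟩ := huc ε hεpos
  set δ := min h d / 2 with hδ
  have hm' : 0 < min h d := lt_min hhpos hd
  have hδpos : 0 < δ := by rw [hδ]; linarith
  have hδh : δ ≤ h / 2 := by rw [hδ]; linarith [min_le_left h d]
  have hδd : δ < d := by rw [hδ]; linarith [min_le_right h d]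
  have hPδ : ∀ t ∈ Icc t1 t2, P δ t ≤ ε := by
    intro t ht'
    have := hud (δ, t) ⟨⟨hδpos.le, by linarith⟩, ht'⟩ (0, t) ⟨⟨le_rfl, zero_le_one⟩, ht'⟩
      (by rw [Prod.dist_eq]; simp [abs_of_pos hδpos, hδd, hd])
    simp only [hP0 t ht', Real.dist_eq, sub_zero] at this
    exact (le_abs_self _).trans this.le
  have hIsub : Icc δ h ⊆ Ioo (0:ℝ) 1 := fun u hu => ⟨by linarith [hu.1], by linarith [hu.2]⟩
  have hδle : δ ≤ h := by linarith
  have hDK : ContinuousOn (fun p : ℝ × ℝ => D p.1 p.2) (Icc δ h ×ˢ Icc t1 t2) :=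
    hD.mono (prod_mono hIsub le_rfl)
  have hswap : ∫ u in δ..h, ∫ t in t1..t2, D u t = ∫ t in t1..t2, ∫ u in δ..h, D u t := by
    apply MeasureTheory.intervalIntegral_intervalIntegral_swap
    rw [uIoc_of_le hδle, uIoc_of_le ht.le]
    exact (hDK.integrableOn_compact (isCompact_Icc.prod isCompact_Icc)).mono_set
      (prod_mono Ioc_subset_Icc_self Ioc_subset_Icc_self)
  have hL : ∫ u in δ..h, ∫ t in t1..t2, D u t = ∫ u in δ..h, (z u t2 - z u t1) := by
    apply intervalIntegral.integral_congr
    intro u hu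
    rw [uIcc_of_le hδle] at hu
    refine intervalIntegral.integral_eq_sub_of_hasDerivAt ?_ ?_
    · intro t ht'
      rw [uIcc_of_le ht.le] at ht'
      exact hzD u (hIsub hu) t ht'
    · apply ContinuousOn.intervalIntegrable
      rw [uIcc_of_le ht.le]
      exact hDK.comp (f := fun t => (u, t)) (by fun_prop) (fun t ht' => ⟨hu, ht'⟩)
  have hR : ∫ t in t1..t2, ∫ u in δ..h, D u t = ∫ t in t1..t2, (P h t - P δ t) := by
    apply intervalIntegral.integral_congr
    intro t ht'
    rw [uIcc_of_le ht.le] at ht'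
    refine intervalIntegral.integral_eq_sub_of_hasDerivAt (f := fun p => P p t) ?_ ?_
    · intro u hu
      rw [uIcc_of_le hδle] at hu
      exact hPD u (hIsub hu) t ht'
    · apply ContinuousOn.intervalIntegrable
      rw [uIcc_of_le hδle]
      exact hDK.comp (f := fun u => (u, t)) (by fun_prop) (fun u hu => ⟨hu, ht'⟩)
  have hPcu : ∀ u ∈ Icc (0:ℝ) 1, ContinuousOn (fun t => P u t) (Icc t1 t2) := fun u hu =>
    hPc.comp (f := fun t => (u, t)) (by fun_prop) (fun t ht' => ⟨hu, ht'⟩)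
  have hup : ∫ u in δ..h, (z u t2 - z u t1) ≤ ∫ _u in δ..h, (-c) := by
    apply intervalIntegral.integral_mono_on hδle
    · apply ContinuousOn.intervalIntegrable
      rw [uIcc_of_le hδle]
      exact ((hzc t2 ht2).sub (hzc t1 ht1)).mono hIsub
    · exact intervalIntegrable_const
    · intro u hu
      exact (hsub ⟨by linarith [hu.1], by linarith [hu.2]⟩ : z u t2 - z u t1 < -c).le
  have hlow : ∫ _t in t1..t2, (-ε) ≤ ∫ t in t1..t2, (P h t - P δ t) := by
    apply intervalIntegral.integral_mono_on ht.le
    · exact intervalIntegrable_const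
    · apply ContinuousOn.intervalIntegrable
      rw [uIcc_of_le ht.le]
      exact (hPcu h ⟨hhpos.le, hhlt1.le⟩).sub (hPcu δ ⟨hδpos.le, by linarith⟩)
    · intro t ht'
      linarith [hPδ t ht', hPnn h ⟨hhpos.le, hhlt1.le⟩ t ht']
  rw [intervalIntegral.integral_const, smul_eq_mul] at hup hlow
  have e : (t2 - t1) * ε = c * h / 4 := by rw [hε]; field_simp
  rw [← hR, ← hswap, hL] at hlow
  have : (h - δ) * c ≥ h / 2 * c := by gcongr; linarith
  nlinarith [mul_pos hcpos hhpos]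

/-- Lemma 6.2 of Barenblatt–Vázquez.
Let `w ≥ 0` solve the differentiated conjugate equation `w_t = (Ψ(w))_{uu}` on
`(0,1) × (0,T)` with zero lateral boundary values, continuous up to the boundary,
positive and smooth inside, bounded on `[0,1] × [s,T)` for every `0 < s < T`, and
with `∫₀¹ w(u,t) du → 0` as `t → T`. Let `z` be an associated mass function,
`z_u = w`, `z_t = (Ψ(w))_u`, with `a ≤ z ≤ b`. Then for each `t ∈ (0,T)` the limits
`l(t) = lim_{u→0⁺} z(u,t)` and `r(t) = lim_{u→1⁻} z(u,t)` exist, the curves `l, r`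
are continuous and monotone (`l` nondecreasing, `r` nonincreasing) on `(0,T)`,
satisfy `a ≤ l(t) < r(t) ≤ b`, and `r(t) − l(t) → 0` as `t → T`. -/
theorem interface_curves_exist_continuous_monotone
    (T : EReal) (hT : 0 < T)
    (Ψ : ℝ → ℝ) (hΨcont : ContinuousOn Ψ (Ici 0))
    (hΨmono : StrictMonoOn Ψ (Ici 0)) (hΨ0 : Ψ 0 = 0)
    (hΨsmooth : ContDiffOn ℝ (⊤ : ℕ∞) Ψ (Ioi 0))
    (a b : ℝ) (w z : ℝ → ℝ → ℝ)
    (hwcont : ContinuousOn (fun p : ℝ × ℝ => w p.1 p.2) (Icc 0 1 ×ˢ timeInterval T))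
    (hwnonneg : ∀ u ∈ Icc (0:ℝ) 1, ∀ t ∈ timeInterval T, 0 ≤ w u t)
    (hwbdry : ∀ t ∈ timeInterval T, w 0 t = 0 ∧ w 1 t = 0)
    (hwpos : ∀ u ∈ Ioo (0:ℝ) 1, ∀ t ∈ timeInterval T, 0 < w u t)
    (hwsmooth : ContDiffOn ℝ (⊤ : ℕ∞) (fun p : ℝ × ℝ => w p.1 p.2)
      (Ioo 0 1 ×ˢ timeInterval T))
    (hwbdd : ∀ s : ℝ, 0 < s → (s : EReal) < T → ∃ M : ℝ,
      ∀ u ∈ Icc (0:ℝ) 1, ∀ t : ℝ, s ≤ t → (t : EReal) < T → w u t ≤ M)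
    (hwpde : ∀ u ∈ Ioo (0:ℝ) 1, ∀ t ∈ timeInterval T,
      deriv (fun s => w u s) t = deriv (deriv (fun p => Ψ (w p t))) u)
    (hwmass : Tendsto (fun t => ∫ u in (0:ℝ)..1, w u t) (approachesHorizon T) (𝓝 0))
    (hzsmooth : ContDiffOn ℝ (⊤ : ℕ∞) (fun p : ℝ × ℝ => z p.1 p.2)
      (Ioo 0 1 ×ˢ timeInterval T))
    (hzu : ∀ u ∈ Ioo (0:ℝ) 1, ∀ t ∈ timeInterval T, deriv (fun p => z p t) u = w u t)
    (hzt : ∀ u ∈ Ioo (0:ℝ) 1, ∀ t ∈ timeInterval T,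
      deriv (fun s => z u s) t = deriv (fun p => Ψ (w p t)) u)
    (hzbdd : ∀ u ∈ Ioo (0:ℝ) 1, ∀ t ∈ timeInterval T, a ≤ z u t ∧ z u t ≤ b) :
    ∃ l r : ℝ → ℝ,
      (∀ t ∈ timeInterval T,
        Tendsto (fun u => z u t) (nhdsWithin 0 (Ioi 0)) (𝓝 (l t)) ∧
        Tendsto (fun u => z u t) (nhdsWithin 1 (Iio 1)) (𝓝 (r t))) ∧
      ContinuousOn l (timeInterval T) ∧ ContinuousOn r (timeInterval T) ∧
      (∀ t ∈ timeInterval T, a ≤ l t ∧ l t < r t ∧ r t ≤ b) ∧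
      MonotoneOn l (timeInterval T) ∧ AntitoneOn r (timeInterval T) ∧
      Tendsto (fun t => r t - l t) (approachesHorizon T) (𝓝 0) := by
  have hopen : IsOpen (timeInterval T) :=
    isOpen_Ioi.inter (isOpen_Iio.preimage continuous_coe_real_ereal)
  have hOop : IsOpen (Ioo (0:ℝ) 1 ×ˢ timeInterval T) := isOpen_Ioo.prod hopen
  have hord : ∀ t1 ∈ timeInterval T, ∀ t2 ∈ timeInterval T, Icc t1 t2 ⊆ timeInterval T := by
    intro t1 h1 t2 h2 t ht
    exact ⟨h1.1.trans_le ht.1, lt_of_le_of_lt (EReal.coe_le_coe_iff.2 ht.2) h2.2⟩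
  -- differentiability of z
  have hzd : ∀ u ∈ Ioo (0:ℝ) 1, ∀ t ∈ timeInterval T,
      DifferentiableAt ℝ (fun p : ℝ × ℝ => z p.1 p.2) (u, t) := fun u hu t ht =>
    ((hzsmooth.contDiffAt (hOop.mem_nhds ⟨hu, ht⟩)).differentiableAt (by simp))
  have hwd : ∀ u ∈ Ioo (0:ℝ) 1, ∀ t ∈ timeInterval T,
      DifferentiableAt ℝ (fun p : ℝ × ℝ => w p.1 p.2) (u, t) := fun u hu t ht =>
    ((hwsmooth.contDiffAt (hOop.mem_nhds ⟨hu, ht⟩)).differentiableAt (by simp))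
  have hzu' : ∀ u ∈ Ioo (0:ℝ) 1, ∀ t ∈ timeInterval T,
      HasDerivAt (fun p => z p t) (w u t) u := by
    intro u hu t ht
    rw [← hzu u hu t ht]
    apply DifferentiableAt.hasDerivAt
    exact DifferentiableAt.comp u (g := fun p : ℝ × ℝ => z p.1 p.2) (f := fun p => (p, t))
      (hzd u hu t ht) (by fun_prop)
  let D : ℝ → ℝ → ℝ := fun u t => deriv (fun s => z u s) t
  have hzD : ∀ u ∈ Ioo (0:ℝ) 1, ∀ t ∈ timeInterval T,
      HasDerivAt (fun s => z u s) (D u t) t := by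
    intro u hu t ht
    apply DifferentiableAt.hasDerivAt
    exact DifferentiableAt.comp t (g := fun p : ℝ × ℝ => z p.1 p.2) (f := fun s => (u, s))
      (hzd u hu t ht) (by fun_prop)
  have hPD : ∀ u ∈ Ioo (0:ℝ) 1, ∀ t ∈ timeInterval T,
      HasDerivAt (fun p => Ψ (w p t)) (D u t) u := by
    intro u hu t ht
    change HasDerivAt (fun p => Ψ (w p t)) (deriv (fun s => z u s) t) u
    rw [hzt u hu t ht]
    apply DifferentiableAt.hasDerivAt
    have hΨd : DifferentiableAt ℝ Ψ (w u t) :=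
      (hΨsmooth.contDiffAt (isOpen_Ioi.mem_nhds (hwpos u hu t ht))).differentiableAt (by simp)
    have hwu : DifferentiableAt ℝ (fun p => w p t) u :=
      DifferentiableAt.comp u (g := fun p : ℝ × ℝ => w p.1 p.2) (f := fun p => (p, t))
        (hwd u hu t ht) (by fun_prop)
    exact DifferentiableAt.comp u (g := Ψ) (f := fun p => w p t) hΨd hwu
  have hDc : ContinuousOn (fun p : ℝ × ℝ => D p.1 p.2) (Ioo 0 1 ×ˢ timeInterval T) := by
    have hf : ContinuousOn (fun p : ℝ × ℝ => fderiv ℝ (fun p : ℝ × ℝ => z p.1 p.2) p ((0:ℝ), (1:ℝ)))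
        (Ioo 0 1 ×ˢ timeInterval T) :=
      (hzsmooth.continuousOn_fderiv_of_isOpen hOop (by simp)).clm_apply continuousOn_const
    refine hf.congr ?_
    rintro ⟨u, t⟩ ⟨hu, ht⟩
    have h1 := (hzd u hu t ht).hasFDerivAt.comp_hasDerivAt t
      ((hasDerivAt_const t u).prodMk (hasDerivAt_id t))
    exact h1.deriv
  have hPc : ContinuousOn (fun p : ℝ × ℝ => Ψ (w p.1 p.2)) (Icc 0 1 ×ˢ timeInterval T) :=
    hΨcont.comp hwcont (fun p hp => hwnonneg p.1 hp.1 p.2 hp.2)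
  have hPnn : ∀ u ∈ Icc (0:ℝ) 1, ∀ t ∈ timeInterval T, 0 ≤ Ψ (w u t) := by
    intro u hu t ht
    rw [← hΨ0]
    exact hΨmono.monotoneOn (mem_Ici.2 le_rfl) (hwnonneg u hu t ht) (hwnonneg u hu t ht)
  have hzc : ∀ t ∈ timeInterval T, ContinuousOn (fun u => z u t) (Ioo 0 1) :=
    fun t ht u hu => (hzu' u hu t ht).continuousAt.continuousWithinAt
  have hzmono : ∀ t ∈ timeInterval T, StrictMonoOn (fun u => z u t) (Ioo 0 1) := by
    intro t ht
    apply strictMonoOn_of_deriv_pos (convex_Ioo 0 1) (hzc t ht)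
    intro u hu
    rw [interior_Ioo] at hu
    rw [hzu u hu t ht]
    exact hwpos u hu t ht
  have hbb : ∀ t ∈ timeInterval T, BddBelow ((fun u => z u t) '' Ioo 0 1) := by
    rintro t ht
    exact ⟨a, by rintro _ ⟨u, hu, rfl⟩; exact (hzbdd u hu t ht).1⟩
  have hba : ∀ t ∈ timeInterval T, BddAbove ((fun u => z u t) '' Ioo 0 1) := by
    rintro t ht
    exact ⟨b, by rintro _ ⟨u, hu, rfl⟩; exact (hzbdd u hu t ht).2⟩
  have hne : (Ioo (0:ℝ) 1).Nonempty := ⟨1/2, by norm_num, by norm_num⟩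
  let l : ℝ → ℝ := fun t => sInf ((fun u => z u t) '' Ioo 0 1)
  let r : ℝ → ℝ := fun t => sSup ((fun u => z u t) '' Ioo 0 1)
  have hl : ∀ t ∈ timeInterval T, Tendsto (fun u => z u t) (𝓝[>] 0) (𝓝 (l t)) := fun t ht =>
    (hzmono t ht).monotoneOn.tendsto_nhdsWithin_Ioo_right hne (hbb t ht)
  have hr : ∀ t ∈ timeInterval T, Tendsto (fun u => z u t) (𝓝[<] 1) (𝓝 (r t)) := fun t ht =>
    (hzmono t ht).monotoneOn.tendsto_nhdsWithin_Ioo_left hne (hba t ht)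
  have hwcu : ∀ t ∈ timeInterval T, ContinuousOn (fun u => w u t) (Icc 0 1) := fun t ht =>
    hwcont.comp (f := fun u => (u, t)) (by fun_prop) (fun u hu => ⟨hu, ht⟩)
  have hwi : ∀ t ∈ timeInterval T, ∀ x ∈ Icc (0:ℝ) 1, ∀ y ∈ Icc (0:ℝ) 1,
      IntervalIntegrable (fun u => w u t) MeasureTheory.volume x y := by
    intro t ht x hx y hy
    exact ((hwcu t ht).mono (ordConnected_Icc.uIcc_subset hx hy)).intervalIntegrable
  have m0 : (0:ℝ) ∈ Icc (0:ℝ) 1 := by norm_num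
  have m1 : (1:ℝ) ∈ Icc (0:ℝ) 1 := by norm_num
  have mh : (1/2:ℝ) ∈ Icc (0:ℝ) 1 := by norm_num
  have mh' : (1/2:ℝ) ∈ Ioo (0:ℝ) 1 := by norm_num
  have hrl : ∀ t ∈ timeInterval T, ∫ u in (0:ℝ)..1, w u t = r t - l t := fun t ht =>
    intervalIntegral.integral_eq_sub_of_hasDerivAt_of_tendsto one_pos
      (fun u hu => hzu' u hu t ht) (hwi t ht 0 m0 1 m1) (hl t ht) (hr t ht)
  have hlh : ∀ t ∈ timeInterval T, ∫ u in (0:ℝ)..(1/2), w u t = z (1/2) t - l t := fun t ht =>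
    intervalIntegral.integral_eq_sub_of_hasDerivAt_of_tendsto (by norm_num)
      (fun u hu => hzu' u ⟨hu.1, hu.2.trans (by norm_num)⟩ t ht) (hwi t ht 0 m0 _ mh) (hl t ht)
      ((hzu' _ mh' t ht).continuousAt.tendsto.mono_left nhdsWithin_le_nhds)
  have hIc : ∀ y ∈ Icc (0:ℝ) 1, ContinuousOn (fun t => ∫ u in (0:ℝ)..y, w u t) (timeInterval T) := by
    intro y hy t0 ht0
    apply ContinuousAt.continuousWithinAt
    have hsub : uIoc 0 y ⊆ Icc (0:ℝ) 1 := by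
      rw [uIoc_of_le hy.1]
      exact fun u hu => ⟨hu.1.le, hu.2.trans hy.2⟩
    have ht0p : 0 < t0 := ht0.1
    obtain ⟨M, hM⟩ := hwbdd (t0 / 2) (by linarith)
      (lt_of_le_of_lt (EReal.coe_le_coe_iff.2 (by linarith)) ht0.2)
    have hmem := hopen.mem_nhds ht0
    refine intervalIntegral.continuousAt_of_dominated_interval (bound := fun _ => M) ?_ ?_ ?_ ?_
    · filter_upwards [hmem] with t ht
      exact (((hwcu t ht).mono hsub).aestronglyMeasurable measurableSet_uIoc)
    · filter_upwards [hmem, lt_mem_nhds (show t0 / 2 < t0 by linarith)] with t ht ht'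
      refine Eventually.of_forall fun u hu => ?_
      rw [Real.norm_eq_abs, abs_of_nonneg (hwnonneg u (hsub hu) t ht)]
      exact hM u (hsub hu) t ht'.le ht.2
    · exact intervalIntegrable_const
    · refine Eventually.of_forall fun u hu => ?_
      have : ContinuousOn (fun t => w u t) (timeInterval T) :=
        hwcont.comp (f := fun t => (u, t)) (by fun_prop) (fun t ht => ⟨hsub hu, ht⟩)
      exact this.continuousAt hmem
  have hlc : ContinuousOn l (timeInterval T) := by
    have hz2 : ContinuousOn (fun t => z (1/2) t) (timeInterval T) :=
      fun t ht => (hzD _ mh' t ht).continuousAt.continuousWithinAt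
    refine (hz2.sub (hIc _ mh)).congr fun t ht => ?_
    have := hlh t ht
    change l t = z (1/2) t - ∫ u in (0:ℝ)..(1/2), w u t
    linarith
  have hrc : ContinuousOn r (timeInterval T) := by
    refine (hlc.add (hIc _ m1)).congr fun t ht => ?_
    have := hrl t ht
    change r t = l t + ∫ u in (0:ℝ)..1, w u t
    linarith
  refine ⟨l, r, fun t ht => ⟨hl t ht, hr t ht⟩, hlc, hrc, ?_, ?_, ?_, ?_⟩
  · intro t ht
    refine ⟨le_csInf (hne.image _) ?_, ?_, csSup_le (hne.image _) ?_⟩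
    · rintro _ ⟨u, hu, rfl⟩
      exact (hzbdd u hu t ht).1
    · have h3 : (1/3:ℝ) ∈ Ioo (0:ℝ) 1 := by norm_num
      calc l t ≤ z (1/3) t := csInf_le (hbb t ht) ⟨_, h3, rfl⟩
        _ < z (1/2) t := hzmono t ht h3 mh' (by norm_num)
        _ ≤ r t := le_csSup (hba t ht) ⟨_, mh', rfl⟩
    · rintro _ ⟨u, hu, rfl⟩
      exact (hzbdd u hu t ht).2
  · intro t1 h1 t2 h2 h12
    rcases h12.eq_or_lt with rfl | hlt
    · exact le_rfl
    have hs := hord t1 h1 t2 h2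
    exact icmc_key hlt z D (fun u t => Ψ (w u t)) (fun t ht => hzc t (hs ht))
      (hDc.mono (prod_mono le_rfl hs)) (fun u hu t ht => hzD u hu t (hs ht))
      (fun u hu t ht => hPD u hu t (hs ht)) (hPc.mono (prod_mono le_rfl hs))
      (fun t ht => by simp only [(hwbdry t (hs ht)).1, hΨ0])
      (fun u hu t ht => hPnn u hu t (hs ht)) (hl t1 h1) (hl t2 h2)
  · intro t1 h1 t2 h2 h12
    rcases h12.eq_or_lt with rfl | hlt
    · exact le_rfl
    have hs := hord t1 h1 t2 h2
    have hfl : ∀ u ∈ Ioo (0:ℝ) 1, 1 - u ∈ Ioo (0:ℝ) 1 := fun u hu =>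
      ⟨by linarith [hu.2], by linarith [hu.1]⟩
    have hfl' : ∀ u ∈ Icc (0:ℝ) 1, 1 - u ∈ Icc (0:ℝ) 1 := fun u hu =>
      ⟨by linarith [hu.2], by linarith [hu.1]⟩
    have htend : Tendsto (fun u : ℝ => 1 - u) (𝓝[>] 0) (𝓝[<] 1) := by
      refine tendsto_nhdsWithin_iff.2 ⟨?_, ?_⟩
      · have : Continuous (fun u : ℝ => 1 - u) := by fun_prop
        exact (this.tendsto' 0 1 (by norm_num)).mono_left nhdsWithin_le_nhds
      · filter_upwards [self_mem_nhdsWithin] with u hu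
        have : (0:ℝ) < u := hu
        exact mem_Iio.2 (by linarith)
    have := icmc_key hlt (fun u t => - z (1 - u) t) (fun u t => - D (1 - u) t)
      (fun u t => Ψ (w (1 - u) t))
      (fun t ht => ((hzc t (hs ht)).comp (f := fun u => 1 - u) (by fun_prop) hfl).neg)
      (ContinuousOn.neg (hDc.comp (f := fun p : ℝ × ℝ => (1 - p.1, p.2)) (by fun_prop)
        (fun p hp => ⟨hfl _ hp.1, hs hp.2⟩)))
      (fun u hu t ht => (hzD _ (hfl u hu) t (hs ht)).neg)
      (fun u hu t ht => by
        have := (hPD _ (hfl u hu) t (hs ht)).comp u ((hasDerivAt_id u).const_sub 1)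
        simpa [Function.comp_def] using this)
      (hPc.comp (f := fun p : ℝ × ℝ => (1 - p.1, p.2)) (by fun_prop)
        (fun p hp => ⟨hfl' _ hp.1, hs hp.2⟩))
      (fun t ht => by simp only [sub_zero, (hwbdry t (hs ht)).2, hΨ0])
      (fun u hu t ht => hPnn _ (hfl' u hu) t (hs ht))
      ((hr t1 h1).comp htend).neg ((hr t2 h2).comp htend).neg
    linarith
  · refine hwmass.congr' ?_
    have hin : ∀ᶠ t in approachesHorizon T, t ∈ timeInterval T := by
      refine ⟨Ioo 0 T, Ioo_mem_nhdsLT hT, ?_⟩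
      rintro t ⟨h1, h2⟩
      exact ⟨EReal.coe_pos.1 h1, h2⟩
    filter_upwards [hin] with t ht
    exact hrl t ht
end

section
/- Let Φ : (0,∞) → ℝ be C^∞ with Φ'(s) > 0 for all s > 0 and lim_{s→∞} Φ(s) finite, and let (u,l,r) be a Type II solution of u_t = (Φ(u_x))_x on (0,T) with initial data u₀ : [a,b] → ℝ. Then the interfaces are monotone: l(t) is monotonically nondecreasing on (0,T) and r(t) is monotonically nonincreasing on (0,T); in particular l(t) ≥ a and r(t) ≤ b for all t. -/
open Set Filter Topology

/-- The space-time domain `Ω = {(x,t) : 0 < t < T, l(t) < x < r(t)}` of a Type II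
solution (time horizon `T ∈ (0,∞]` is encoded as an extended real number). -/
def typeIIDomain (T : EReal) (l r : ℝ → ℝ) : Set (ℝ × ℝ) :=
  {p : ℝ × ℝ | 0 < p.2 ∧ (p.2 : EReal) < T ∧ l p.2 < p.1 ∧ p.1 < r p.2}

/-- A Type II solution of `u_t = (Φ(u_x))_x` with initial data `u₀ : [a,b] → ℝ`:
continuous interface curves `l, r` on `[0,T)` with `l(0) = a`, `r(0) = b`,
`l(t) < r(t)`, a function `u` continuous on the closure of
`Ω = {(x,t) : 0 < t < T, l(t) < x < r(t)}` and smooth in `Ω`, solving the equation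
in `Ω`, taking the initial data on `[a,b]`, the boundary values `u = 0` on `x = l(t)`
and `u = 1` on `x = r(t)`, with `∂ₓu → +∞` at both lateral boundaries. -/
structure IsTypeIISolution (Φ : ℝ → ℝ) (T : EReal) (a b : ℝ) (u₀ : ℝ → ℝ)
    (u : ℝ → ℝ → ℝ) (l r : ℝ → ℝ) : Prop where
  T_pos : 0 < T
  l_init : l 0 = a
  r_init : r 0 = b
  l_lt_r : ∀ t : ℝ, 0 < t → (t : EReal) < T → l t < r t
  l_cont : ContinuousOn l {t : ℝ | 0 ≤ t ∧ (t : EReal) < T}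
  r_cont : ContinuousOn r {t : ℝ | 0 ≤ t ∧ (t : EReal) < T}
  u_cont : ContinuousOn (fun p : ℝ × ℝ => u p.1 p.2) (closure (typeIIDomain T l r))
  u_smooth : ContDiffOn ℝ (⊤ : ℕ∞) (fun p : ℝ × ℝ => u p.1 p.2) (typeIIDomain T l r)
  pde : ∀ x t : ℝ, (x, t) ∈ typeIIDomain T l r →
    deriv (fun s => u x s) t = deriv (fun y => Φ (deriv (fun z => u z t) y)) x
  init : ∀ x : ℝ, a ≤ x → x ≤ b → u x 0 = u₀ x
  bdry_left : ∀ t : ℝ, 0 < t → (t : EReal) < T → u (l t) t = 0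
  bdry_right : ∀ t : ℝ, 0 < t → (t : EReal) < T → u (r t) t = 1
  grad_left : ∀ t : ℝ, 0 < t → (t : EReal) < T →
    Tendsto (fun x => deriv (fun z => u z t) x) (nhdsWithin (l t) (Ioi (l t))) atTop
  grad_right : ∀ t : ℝ, 0 < t → (t : EReal) < T →
    Tendsto (fun x => deriv (fun z => u z t) x) (nhdsWithin (r t) (Iio (r t))) atTop


/-- Interior step: at a one-sided-in-time maximum a contradiction with the equation. -/
lemma core_interior (Φ : ℝ → ℝ) (hΦ' : ∀ s : ℝ, 0 < s → 0 < deriv Φ s)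
    (u : ℝ → ℝ → ℝ) (x t k ε : ℝ) (hk : 0 < k) (hε : 0 < ε)
    (hu : ContDiffAt ℝ 2 (fun p : ℝ × ℝ => u p.1 p.2) (x, t))
    (pde : deriv (fun s => u x s) t = deriv (fun y => Φ (deriv (fun z => u z t) y)) x)
    (hx : ∀ᶠ y in 𝓝 x, u y t - k * y ≤ u x t - k * x)
    (ht : ∀ᶠ s in 𝓝[<] t, u x s - ε * s ≤ u x t - ε * t) : False := by
  have hg : ContDiffAt ℝ 2 (fun z => u z t) x :=
    ContDiffAt.comp (f := fun z : ℝ => (z, t)) x hu (by fun_prop)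
  have hq : ContDiffAt ℝ 2 (fun s => u x s) t :=
    ContDiffAt.comp (f := fun s : ℝ => (x, s)) t hu (by fun_prop)
  have hqd : DifferentiableAt ℝ (fun s => u x s) t := hq.differentiableAt (by norm_num)
  have hgd : ∀ᶠ y in 𝓝 x, DifferentiableAt ℝ (fun z => u z t) y := by
    filter_upwards [hg.eventually (by simp)] with y hy
    exact hy.differentiableAt (by norm_num)
  have hgd2 : DifferentiableAt ℝ (deriv (fun z => u z t)) x := by
    have h1 : ContDiffAt ℝ 1 (deriv (fun z => u z t)) x := by
      have h2 := hg.fderiv_right (m := 1) (by norm_num)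
      have h3 : deriv (fun z => u z t) = fun y => fderiv ℝ (fun z => u z t) y 1 := by
        ext y; simp
      rw [h3]
      exact h2.clm_apply contDiffAt_const
    exact h1.differentiableAt (by norm_num)
  -- time derivative
  have h1 : ε ≤ deriv (fun s => u x s) t := by
    have hd := hqd.hasDerivAt
    have hs := (hasDerivAt_iff_tendsto_slope_left_right.1 hd).1
    refine ge_of_tendsto hs ?_
    filter_upwards [ht, self_mem_nhdsWithin] with s hs1 hs2
    rw [slope_def_field]
    have : s - t < 0 := sub_neg.2 hs2
    rw [le_div_iff_of_neg this]
    nlinarith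
  -- space derivatives
  have hder : ∀ᶠ y in 𝓝 x, deriv (fun z => u z t - k * z) y = deriv (fun z => u z t) y - k := by
    filter_upwards [hgd] with y hy
    have := (hy.hasDerivAt).fun_sub ((hasDerivAt_id y).const_mul k)
    simpa using this.deriv
  have hmax : IsLocalMax (fun z => u z t - k * z) x := hx
  have h0 : deriv (fun z => u z t - k * z) x = 0 := hmax.deriv_eq_zero
  have hk1 : deriv (fun z => u z t) x = k := by
    have := hder.self_of_nhds
    linarith
  have hdd : deriv (deriv (fun z => u z t - k * z)) x = deriv (deriv (fun z => u z t)) x := by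
    rw [Filter.EventuallyEq.deriv_eq hder]
    simp
  have h2 : deriv (deriv (fun z => u z t)) x ≤ 0 := by
    by_contra hcon
    push Not at hcon
    rw [← hdd] at hcon
    have hmin := isLocalMin_of_deriv_deriv_pos hcon h0
      (hg.continuousAt.sub (by fun_prop))
    have hc : (fun z => u z t - k * z) =ᶠ[𝓝 x] fun _ => u x t - k * x := by
      filter_upwards [hmin, hx] with y hy1 hy2
      exact le_antisymm hy2 hy1
    have hc2 := hc.deriv.deriv_eq
    simp at hc2
    linarith
  have hΦd : DifferentiableAt ℝ Φ k := differentiableAt_of_deriv_ne_zero (hΦ' k hk).ne'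
  have h3 : deriv (fun y => Φ (deriv (fun z => u z t) y)) x
      = deriv Φ k * deriv (deriv (fun z => u z t)) x := by
    have hc : HasDerivAt Φ (deriv Φ k) (deriv (fun z => u z t) x) := by
      rw [hk1]; exact hΦd.hasDerivAt
    exact (hc.comp x hgd2.hasDerivAt).deriv
  have := hΦ' k hk
  nlinarith

lemma core_left (Φ : ℝ → ℝ) (hΦ' : ∀ s : ℝ, 0 < s → 0 < deriv Φ s)
    (u : ℝ → ℝ → ℝ) (l r : ℝ → ℝ) (t1 t2 : ℝ) (h12 : t1 ≤ t2)
    (hl : ContinuousOn l (Icc t1 t2)) (hr : ContinuousOn r (Icc t1 t2))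
    (hlr : ∀ t ∈ Icc t1 t2, l t < r t)
    (huc : ContinuousOn (fun p : ℝ × ℝ => u p.1 p.2)
      {p : ℝ × ℝ | p.2 ∈ Icc t1 t2 ∧ p.1 ∈ Icc (l p.2) (r p.2)})
    (hus : ∀ t ∈ Icc t1 t2, ∀ x ∈ Ioo (l t) (r t),
      ContDiffAt ℝ 2 (fun p : ℝ × ℝ => u p.1 p.2) (x, t))
    (pde : ∀ t ∈ Icc t1 t2, ∀ x ∈ Ioo (l t) (r t),
      deriv (fun s => u x s) t = deriv (fun y => Φ (deriv (fun z => u z t) y)) x)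
    (hbl : ∀ t ∈ Icc t1 t2, u (l t) t = 0)
    (hbr : ∀ t ∈ Icc t1 t2, u (r t) t = 1)
    (hgl : ∀ t ∈ Icc t1 t2,
      Tendsto (fun x => deriv (fun z => u z t) x) (𝓝[>] (l t)) atTop) :
    l t1 ≤ l t2 := by
  by_contra hcon
  push Not at hcon
  have hne : (Icc t1 t2).Nonempty := nonempty_Icc.2 h12
  obtain ⟨τ, hτ, hτmin⟩ := isCompact_Icc.exists_isMinOn hne hl
  obtain ⟨σ, hσ, hσmin⟩ := isCompact_Icc.exists_isMinOn hne hr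
  have hm1 : l τ < l t1 := lt_of_le_of_lt (hτmin (right_mem_Icc.2 h12)) hcon
  have hm2 : l τ < r σ := lt_of_le_of_lt (hτmin hσ) (hlr σ hσ)
  obtain ⟨x0, hx0, hx0'⟩ := exists_between (lt_min hm1 hm2)
  have hxa : x0 < l t1 := hx0'.trans_le (min_le_left _ _)
  have hxb : x0 < r σ := hx0'.trans_le (min_le_right _ _)
  -- compactness
  set K : Set (ℝ × ℝ) := {p : ℝ × ℝ | p.2 ∈ Icc t1 t2 ∧ p.1 ∈ Icc (l p.2) (r p.2)} with hK
  have hKc : IsCompact K := by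
    have himg : K = (fun q : ℝ × ℝ => (l q.2 + q.1 * (r q.2 - l q.2), q.2)) ''
        (Icc (0:ℝ) 1 ×ˢ Icc t1 t2) := by
      ext ⟨x, t⟩
      constructor
      · rintro ⟨ht, hx1, hx2⟩
        simp only at ht hx1 hx2
        have hp := sub_pos.2 (hlr t ht)
        refine ⟨((x - l t) / (r t - l t), t), ⟨⟨?_, ?_⟩, ht⟩, ?_⟩
        · exact div_nonneg (by linarith) hp.le
        · exact (div_le_one hp).2 (by linarith)
        · simp only [Prod.mk.injEq, and_true]
          field_simp
          ring
      · rintro ⟨⟨s, t'⟩, ⟨⟨hs0, hs1⟩, ht⟩, heq⟩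
        simp only [Prod.mk.injEq] at heq hs0 hs1 ht
        obtain ⟨rfl, rfl⟩ := heq
        have hp := sub_pos.2 (hlr t' ht)
        refine ⟨ht, ?_, ?_⟩ <;> simp only <;> nlinarith
    rw [himg]
    refine (isCompact_Icc.prod isCompact_Icc).image_of_continuousOn ?_
    have hl2 : ContinuousOn (fun q : ℝ × ℝ => l q.2) (Icc (0:ℝ) 1 ×ˢ Icc t1 t2) :=
      hl.comp continuousOn_snd (fun q hq => hq.2)
    have hr2 : ContinuousOn (fun q : ℝ × ℝ => r q.2) (Icc (0:ℝ) 1 ×ˢ Icc t1 t2) :=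
      hr.comp continuousOn_snd (fun q hq => hq.2)
    exact (hl2.add (continuousOn_fst.mul (hr2.sub hl2))).prodMk continuousOn_snd
  have hmemτ : (l τ, τ) ∈ K := ⟨hτ, le_refl _, (hlr τ hτ).le⟩
  obtain ⟨pM, -, hpM⟩ := hKc.exists_isMaxOn ⟨_, hmemτ⟩ huc
  set M := u pM.1 pM.2 with hM
  have hMle : ∀ p ∈ K, u p.1 p.2 ≤ M := fun p hp => hpM hp
  -- choice of the slope
  obtain ⟨k, hk0, hk1, hk2⟩ : ∃ k : ℝ, 0 < k ∧ M < k * (l t1 - x0) ∧ 1 < k * (r σ - x0) := by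
    have e1 : Tendsto (fun k : ℝ => k * (l t1 - x0)) atTop atTop :=
      tendsto_id.atTop_mul_const (sub_pos.2 hxa)
    have e2 : Tendsto (fun k : ℝ => k * (r σ - x0)) atTop atTop :=
      tendsto_id.atTop_mul_const (sub_pos.2 hxb)
    exact ((eventually_gt_atTop 0).and
      ((e1.eventually_gt_atTop M).and (e2.eventually_gt_atTop 1))).exists
  obtain ⟨ε, hε0, hε⟩ : ∃ ε : ℝ, 0 < ε ∧ ε * (t2 - t1 + 1) = k * (x0 - l τ) / 2 := by
    have : 0 < t2 - t1 + 1 := by linarith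
    refine ⟨k * (x0 - l τ) / 2 / (t2 - t1 + 1), ?_, by field_simp⟩
    have : 0 < x0 - l τ := by linarith
    positivity
  have hvc : ContinuousOn (fun p : ℝ × ℝ => u p.1 p.2 - k * (p.1 - x0) - ε * (p.2 - t1)) K :=
    (huc.sub (by fun_prop)).sub (by fun_prop)
  obtain ⟨⟨x, t⟩, ⟨ht, hxK⟩, hmax⟩ := hKc.exists_isMaxOn ⟨_, hmemτ⟩ hvc
  have hmax' : ∀ y s, s ∈ Icc t1 t2 → y ∈ Icc (l s) (r s) →
      u y s - k * (y - x0) - ε * (s - t1) ≤ u x t - k * (x - x0) - ε * (t - t1) :=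
    fun y s hs hy => hmax (show (y, s) ∈ K from ⟨hs, hy⟩)
  simp only at ht hxK
  have hpos : 0 < u x t - k * (x - x0) - ε * (t - t1) := by
    have h1 := hmax' (l τ) τ hτ ⟨le_refl _, (hlr τ hτ).le⟩
    rw [hbl τ hτ] at h1
    have : ε * (τ - t1) ≤ ε * (t2 - t1 + 1) :=
      mul_le_mul_of_nonneg_left (by linarith [hτ.2]) hε0.le
    have : 0 < k * (x0 - l τ) := mul_pos hk0 (by linarith)
    linarith
  have hεt : 0 ≤ ε * (t - t1) := mul_nonneg hε0.le (by linarith [ht.1])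
  -- not at the initial time
  have htne : t1 < t := by
    rcases ht.1.eq_or_lt with he | hlt
    · exfalso
      have h1 := hMle (x, t) ⟨ht, hxK⟩
      simp only at h1
      have h2 : l t1 ≤ x := by rw [he]; exact hxK.1
      have : k * (l t1 - x0) ≤ k * (x - x0) := mul_le_mul_of_nonneg_left (by linarith) hk0.le
      linarith
    · exact hlt
  -- not at the right boundary
  have hxr : x < r t := by
    rcases hxK.2.eq_or_lt with he | hlt
    · exfalso
      rw [he, hbr t ht] at hpos
      have h2 : r σ ≤ r t := hσmin ht
      have : k * (r σ - x0) ≤ k * (r t - x0) := mul_le_mul_of_nonneg_left (by linarith) hk0.le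
      linarith
    · exact hlt
  -- not at the left boundary
  have hxl : l t < x := by
    rcases hxK.1.eq_or_lt with he | hlt
    · exfalso
      have hev := (hgl t ht).eventually_gt_atTop k
      rw [(nhdsGT_basis (l t)).eventually_iff] at hev
      obtain ⟨c, hc, hcd⟩ := hev
      obtain ⟨y, hy1, hy2⟩ := exists_between (lt_min hc (hlr t ht))
      have hyc : y < c := hy2.trans_le (min_le_left _ _)
      have hyr : y < r t := hy2.trans_le (min_le_right _ _)
      have hcont : ContinuousOn (fun z => u z t - k * z) (Icc (l t) y) := by
        refine ContinuousOn.sub ?_ (by fun_prop)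
        exact huc.comp (f := fun z : ℝ => (z, t)) (by fun_prop)
          (fun z hz => ⟨ht, hz.1, hz.2.trans hyr.le⟩)
      have hmono := strictMonoOn_of_deriv_pos (convex_Icc (l t) y) hcont (by
        intro z hz
        rw [interior_Icc] at hz
        have hz1 : k < deriv (fun z => u z t) z := hcd ⟨hz.1, hz.2.trans hyc⟩
        have hzd : DifferentiableAt ℝ (fun z => u z t) z :=
          differentiableAt_of_deriv_ne_zero (by linarith)
        have := (hzd.hasDerivAt).fun_sub ((hasDerivAt_id z).const_mul k)
        have h3 : deriv (fun z => u z t - k * z) z = deriv (fun z => u z t) z - k := by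
          simpa using this.deriv
        rw [h3]; linarith)
      have h4 := hmono (left_mem_Icc.2 hy1.le) (right_mem_Icc.2 hy1.le) hy1
      simp only at h4
      have h5 := hmax' y t ht ⟨hy1.le, hyr.le⟩
      rw [← he] at h5
      linarith
    · exact hlt
  -- interior
  refine core_interior Φ hΦ' u x t k ε hk0 hε0 (hus t ht x ⟨hxl, hxr⟩) (pde t ht x ⟨hxl, hxr⟩)
    ?_ ?_
  · filter_upwards [Ioo_mem_nhds hxl hxr] with y hy
    have := hmax' y t ht ⟨hy.1.le, hy.2.le⟩
    linarith
  · have hsub : Ioo t1 t ⊆ Icc t1 t2 := fun s hs => ⟨hs.1.le, hs.2.le.trans ht.2⟩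
    have hmem : Ioo t1 t ∈ 𝓝[<] t := Ioo_mem_nhdsLT htne
    have hle : 𝓝[<] t ≤ 𝓝[Icc t1 t2] t :=
      nhdsWithin_le_of_mem (mem_of_superset hmem hsub)
    have e1 : ∀ᶠ s in 𝓝[<] t, l s < x :=
      ((hl t ht).mono_left hle).eventually_lt_const hxl
    have e2 : ∀ᶠ s in 𝓝[<] t, x < r s :=
      ((hr t ht).mono_left hle).eventually_const_lt hxr
    filter_upwards [hmem, e1, e2] with s hs h1 h2
    have := hmax' x s (hsub hs) ⟨h1.le, h2.le⟩
    linarith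

/-- Corollary in Section 7 of Barenblatt–Vázquez.
For any Type II solution `(u,l,r)` of `u_t = (Φ(u_x))_x` with initial data
`u₀ : [a,b] → ℝ`, the interfaces are monotone: `l` is nondecreasing and `r` is
nonincreasing on `(0,T)`; in particular `l(t) ≥ a` and `r(t) ≤ b` for all `t`. -/
theorem typeII_interfaces_monotone
    (Φ : ℝ → ℝ) (hΦsmooth : ContDiffOn ℝ (⊤ : ℕ∞) Φ (Ioi 0))
    (hΦ' : ∀ s : ℝ, 0 < s → 0 < deriv Φ s)
    (hPhiInf : ∃ L : ℝ, Tendsto Φ atTop (𝓝 L))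
    (T : EReal) (a b : ℝ) (u₀ : ℝ → ℝ) (u : ℝ → ℝ → ℝ) (l r : ℝ → ℝ)
    (h : IsTypeIISolution Φ T a b u₀ u l r) :
    MonotoneOn l {t : ℝ | 0 < t ∧ (t : EReal) < T} ∧
    AntitoneOn r {t : ℝ | 0 < t ∧ (t : EReal) < T} ∧
    ∀ t : ℝ, 0 < t → (t : EReal) < T → a ≤ l t ∧ r t ≤ b := by
  have hI : ∀ t1 t2 : ℝ, 0 < t1 → (t2 : EReal) < T → ∀ t ∈ Icc t1 t2, 0 < t ∧ (t : EReal) < T :=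
    fun t1 t2 h1 h2 t ht => ⟨h1.trans_le ht.1, (EReal.coe_le_coe_iff.2 ht.2).trans_lt h2⟩
  have hnhds : ∀ t : ℝ, 0 < t → (t : EReal) < T → ∀ᶠ s : ℝ in 𝓝 t, 0 < s ∧ (s : EReal) < T :=
    fun t h0 hT => (eventually_gt_nhds h0).and
      (continuous_coe_real_ereal.continuousAt.eventually_lt_const hT)
  have hlc : ∀ t : ℝ, 0 < t → (t : EReal) < T → ContinuousAt l t := fun t h0 hT =>
    h.l_cont.continuousAt ((hnhds t h0 hT).mono fun s hs => ⟨hs.1.le, hs.2⟩)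
  have hrc : ∀ t : ℝ, 0 < t → (t : EReal) < T → ContinuousAt r t := fun t h0 hT =>
    h.r_cont.continuousAt ((hnhds t h0 hT).mono fun s hs => ⟨hs.1.le, hs.2⟩)
  have hcl : ∀ p : ℝ × ℝ, 0 < p.2 → (p.2 : EReal) < T → p.1 ∈ Icc (l p.2) (r p.2) →
      p ∈ closure (typeIIDomain T l r) := by
    rintro ⟨x, t⟩ h0 hT hx
    rw [← closure_Ioo (h.l_lt_r t h0 hT).ne] at hx
    exact map_mem_closure (f := fun z : ℝ => (z, t)) (by fun_prop) hx
      (fun z hz => ⟨h0, hT, hz.1, hz.2⟩)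
  have hsm : ∀ x t : ℝ, 0 < t → (t : EReal) < T → x ∈ Ioo (l t) (r t) →
      ContDiffAt ℝ 2 (fun p : ℝ × ℝ => u p.1 p.2) (x, t) := by
    intro x t h0 hT hx
    have hmem : typeIIDomain T l r ∈ 𝓝 (x, t) := by
      have c2 : Tendsto (fun p : ℝ × ℝ => p.2) (𝓝 (x, t)) (𝓝 t) := continuousAt_snd
      have c1 : Tendsto (fun p : ℝ × ℝ => p.1) (𝓝 (x, t)) (𝓝 x) := continuousAt_fst
      have cl : Tendsto (fun p : ℝ × ℝ => l p.2) (𝓝 (x, t)) (𝓝 (l t)) := (hlc t h0 hT).tendsto.comp c2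
      have cr : Tendsto (fun p : ℝ × ℝ => r p.2) (𝓝 (x, t)) (𝓝 (r t)) := (hrc t h0 hT).tendsto.comp c2
      filter_upwards [c2.eventually (hnhds t h0 hT), cl.eventually_lt c1 hx.1,
        c1.eventually_lt cr hx.2] with p h1 h2 h3
      exact ⟨h1.1, h1.2, h2, h3⟩
    exact (h.u_smooth.contDiffAt hmem).of_le (WithTop.coe_le_coe.2 (le_top : (2 : ℕ∞) ≤ ⊤))
  have hL : ∀ t1 t2 : ℝ, 0 < t1 → (t2 : EReal) < T → t1 ≤ t2 → l t1 ≤ l t2 := by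
    intro t1 t2 h0 hT h12
    have hi := hI t1 t2 h0 hT
    refine core_left Φ hΦ' u l r t1 t2 h12 ?_ ?_ ?_ ?_ ?_ ?_ ?_ ?_ ?_
    · exact fun t ht => (hlc t (hi t ht).1 (hi t ht).2).continuousWithinAt
    · exact fun t ht => (hrc t (hi t ht).1 (hi t ht).2).continuousWithinAt
    · exact fun t ht => h.l_lt_r t (hi t ht).1 (hi t ht).2
    · exact h.u_cont.mono fun p hp => hcl p (hi _ hp.1).1 (hi _ hp.1).2 hp.2
    · exact fun t ht x hx => hsm x t (hi t ht).1 (hi t ht).2 hx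
    · exact fun t ht x hx => h.pde x t ⟨(hi t ht).1, (hi t ht).2, hx.1, hx.2⟩
    · exact fun t ht => h.bdry_left t (hi t ht).1 (hi t ht).2
    · exact fun t ht => h.bdry_right t (hi t ht).1 (hi t ht).2
    · exact fun t ht => h.grad_left t (hi t ht).1 (hi t ht).2
  have hR : ∀ t1 t2 : ℝ, 0 < t1 → (t2 : EReal) < T → t1 ≤ t2 → r t2 ≤ r t1 := by
    intro t1 t2 h0 hT h12
    have hi := hI t1 t2 h0 hT
    have hdx : ∀ t y : ℝ, deriv (fun z => 1 - u (-z) t) y = deriv (fun z => u z t) (-y) := by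
      intro t y
      rw [deriv_const_sub, deriv_comp_neg (fun z => u z t) y, neg_neg]
    have := core_left Φ hΦ' (fun x t => 1 - u (-x) t) (fun t => - r t) (fun t => - l t) t1 t2 h12
      ?_ ?_ ?_ ?_ ?_ ?_ ?_ ?_ ?_
    · simpa using this
    · exact fun t ht => (hrc t (hi t ht).1 (hi t ht).2).neg.continuousWithinAt
    · exact fun t ht => (hlc t (hi t ht).1 (hi t ht).2).neg.continuousWithinAt
    · exact fun t ht => neg_lt_neg (h.l_lt_r t (hi t ht).1 (hi t ht).2)
    · refine ContinuousOn.sub continuousOn_const ?_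
      refine h.u_cont.comp (f := fun p : ℝ × ℝ => (-p.1, p.2)) (by fun_prop) ?_
      intro p hp
      exact hcl _ (hi _ hp.1).1 (hi _ hp.1).2 ⟨le_neg.1 hp.2.2, neg_le.1 hp.2.1⟩
    · intro t ht x hx
      refine ContDiffAt.sub contDiffAt_const ?_
      exact ContDiffAt.comp (f := fun p : ℝ × ℝ => (-p.1, p.2)) (x, t)
        (hsm (-x) t (hi t ht).1 (hi t ht).2 ⟨lt_neg.1 hx.2, neg_lt.1 hx.1⟩) (by fun_prop)
    · intro t ht x hx
      have hp := h.pde (-x) t ⟨(hi t ht).1, (hi t ht).2, lt_neg.1 hx.2, neg_lt.1 hx.1⟩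
      simp only [hdx]
      rw [deriv_const_sub, hp, deriv_comp_neg (fun y => Φ (deriv (fun z => u z t) y)) x]
    · intro t ht
      simp [h.bdry_right t (hi t ht).1 (hi t ht).2]
    · intro t ht
      simp [h.bdry_left t (hi t ht).1 (hi t ht).2]
    · intro t ht
      simp only [hdx]
      have hn : Tendsto (fun x : ℝ => -x) (𝓝[>] (-r t)) (𝓝[<] (r t)) := by
        simpa using tendsto_neg_nhdsGT (a := -r t)
      exact (h.grad_right t (hi t ht).1 (hi t ht).2).comp hn
  refine ⟨fun s hs t ht hst => hL s t hs.1 ht.2 hst, fun s hs t ht hst => hR s t hs.1 ht.2 hst, ?_⟩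
  intro t h0 hT
  have hsub : Ioo 0 t ⊆ {t : ℝ | 0 ≤ t ∧ (t : EReal) < T} := fun s hs =>
    ⟨hs.1.le, (EReal.coe_lt_coe_iff.2 hs.2).trans hT⟩
  have h00 : (0:ℝ) ∈ {t : ℝ | 0 ≤ t ∧ (t : EReal) < T} := ⟨le_refl _, by exact_mod_cast h.T_pos⟩
  have hmem : Ioo 0 t ∈ 𝓝[>] (0:ℝ) := Ioo_mem_nhdsGT h0
  have hle : 𝓝[>] (0:ℝ) ≤ 𝓝[{t : ℝ | 0 ≤ t ∧ (t : EReal) < T}] 0 :=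
    nhdsWithin_le_of_mem (mem_of_superset hmem hsub)
  constructor
  · rw [← h.l_init]
    refine le_of_tendsto ((h.l_cont 0 h00).mono_left hle) ?_
    filter_upwards [hmem] with s hs
    exact hL s t hs.1 hT hs.2.le
  · rw [← h.r_init]
    refine ge_of_tendsto ((h.r_cont 0 h00).mono_left hle) ?_
    filter_upwards [hmem] with s hs
    exact hR s t hs.1 hT hs.2.le
end

section
/- Let Φ : (0,∞) → ℝ be C^∞ with Φ'(s) > 0 for all s > 0, let Ω = I × J with I, J open intervals, and let u : Ω → ℝ be a C^∞ solution of ∂_t u = ∂ₓ(Φ(∂ₓu)) with ∂ₓu > 0 on Ω, with inverse profiles X(·,t) satisfying u(X(p,t),t) = p. Define w(p,t) = ∂_p X(p,t) and v(x,t) = ∂ₓu(x,t). Then w satisfies the differentiated conjugate equation ∂_t w = ∂_p²(Ψ(w)), where Ψ(s) = −Φ(1/s), and the Bäcklund relation v(x,t) · w(u(x,t),t) = 1 holds for all (x,t) ∈ Ω. -/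
open Set Filter Topology

lemma aux_le : (2 : WithTop ℕ∞) ≤ ((⊤ : ℕ∞) : WithTop ℕ∞) := by
  have h : ((2 : ℕ∞) : WithTop ℕ∞) ≤ ((⊤ : ℕ∞) : WithTop ℕ∞) := WithTop.coe_le_coe.2 le_top
  exact h

lemma aux_p1 {f : ℝ × ℝ → ℝ} {x t : ℝ} (h : DifferentiableAt ℝ f (x, t)) :
    HasDerivAt (fun z => f (z, t)) (fderiv ℝ f (x, t) (1, 0)) x :=
  h.hasFDerivAt.comp_hasDerivAt x ((hasDerivAt_id x).prodMk (hasDerivAt_const x t))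

lemma aux_p2 {f : ℝ × ℝ → ℝ} {x t : ℝ} (h : DifferentiableAt ℝ f (x, t)) :
    HasDerivAt (fun s => f (x, s)) (fderiv ℝ f (x, t) (0, 1)) t :=
  h.hasFDerivAt.comp_hasDerivAt t ((hasDerivAt_const t x).prodMk (hasDerivAt_id t))

lemma aux_t1 {P : ℝ × ℝ → Prop} {x t : ℝ} (h : ∀ᶠ z in 𝓝 (x, t), P z) :
    ∀ᶠ y in 𝓝 x, P (y, t) :=
  (Continuous.prodMk_left t).continuousAt.eventually h

lemma aux_t2 {P : ℝ × ℝ → Prop} {x t : ℝ} (h : ∀ᶠ z in 𝓝 (x, t), P z) :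
    ∀ᶠ s in 𝓝 t, P (x, s) :=
  (Continuous.prodMk_right x).continuousAt.eventually h

lemma aux_symm {f : ℝ × ℝ → ℝ} {p t : ℝ} (h : ContDiffAt ℝ (⊤ : ℕ∞) f (p, t)) :
    deriv (fun s => deriv (fun q => f (q, s)) p) t =
      deriv (fun q => deriv (fun s => f (q, s)) t) p := by
  have h2 : ContDiffAt ℝ 2 f (p, t) := h.of_le aux_le
  have hs := h2.isSymmSndFDerivAt (by simp)
  have hd : ∀ᶠ z in 𝓝 (p, t), DifferentiableAt ℝ f z :=
    (h2.eventually (by simp)).mono fun z hz => hz.differentiableAt (by simp)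
  have hf : DifferentiableAt ℝ (fderiv ℝ f) (p, t) :=
    (h2.fderiv_right (m := 1) (by norm_num)).differentiableAt (by simp)
  have e1 : (fun s => deriv (fun q => f (q, s)) p) =ᶠ[𝓝 t] fun s => fderiv ℝ f (p, s) (1, 0) :=
    (aux_t2 hd).mono fun s hs => (aux_p1 hs).deriv
  have e2 : (fun q => deriv (fun s => f (q, s)) t) =ᶠ[𝓝 p] fun q => fderiv ℝ f (q, t) (0, 1) :=
    (aux_t1 hd).mono fun s hs => (aux_p2 hs).deriv
  rw [e1.deriv_eq, e2.deriv_eq]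
  have a1 : HasDerivAt (fun s => fderiv ℝ f (p, s)) (fderiv ℝ (fderiv ℝ f) (p, t) (0, 1)) t :=
    hf.hasFDerivAt.comp_hasDerivAt t ((hasDerivAt_const t p).prodMk (hasDerivAt_id t))
  have a2 : HasDerivAt (fun q => fderiv ℝ f (q, t)) (fderiv ℝ (fderiv ℝ f) (p, t) (1, 0)) p :=
    hf.hasFDerivAt.comp_hasDerivAt p ((hasDerivAt_id p).prodMk (hasDerivAt_const p t))
  have b1 := (a1.clm_apply (hasDerivAt_const t ((1 : ℝ), (0 : ℝ)))).deriv
  have b2 := (a2.clm_apply (hasDerivAt_const p ((0 : ℝ), (1 : ℝ)))).deriv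
  rw [b1, b2]
  simpa using hs (0, 1) (1, 0)

/-- local smoothness of the inverse profiles -/
lemma aux_inv {U : ℝ × ℝ → ℝ} {S : Set (ℝ × ℝ)} (hS : IsOpen S)
    (hU : ContDiffOn ℝ (⊤ : ℕ∞) U S) {Y : ℝ × ℝ → ℝ}
    (hY : ∀ z ∈ S, Y (U z, z.2) = z.1) {x t : ℝ} (hz : (x, t) ∈ S)
    (hpos : fderiv ℝ U (x, t) (1, 0) ≠ 0) :
    ContDiffAt ℝ (⊤ : ℕ∞) Y (U (x, t), t) ∧
      ∀ᶠ y in 𝓝 (U (x, t), t), ∃ z ∈ S, (U z, z.2) = y := by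
  have hUa : ContDiffAt ℝ (⊤ : ℕ∞) U (x, t) := hU.contDiffAt (hS.mem_nhds hz)
  set L := fderiv ℝ U (x, t) with hL
  have hUd : HasFDerivAt U L (x, t) := (hUa.differentiableAt (by simp)).hasFDerivAt
  let F : ℝ × ℝ → ℝ × ℝ := fun z => (U z, z.2)
  have hF : ContDiffAt ℝ (⊤ : ℕ∞) F (x, t) := hUa.prodMk contDiffAt_snd
  have hFd : HasFDerivAt F (L.prod (ContinuousLinearMap.snd ℝ ℝ ℝ)) (x, t) :=
    hUd.prodMk hasFDerivAt_snd
  have hLs : ∀ a b : ℝ, L (a, b) = a * L (1, 0) + b * L (0, 1) := by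
    intro a b
    have : ((a, b) : ℝ × ℝ) = a • (1, 0) + b • (0, 1) := by ext <;> simp
    rw [this, map_add, map_smul, map_smul]; simp
  have hinj : Function.Injective (L.prod (ContinuousLinearMap.snd ℝ ℝ ℝ)) := by
    rw [injective_iff_map_eq_zero]
    rintro ⟨a, b⟩ h
    simp only [ContinuousLinearMap.prod_apply, ContinuousLinearMap.coe_snd', Prod.mk_eq_zero] at h
    obtain ⟨h1, rfl⟩ := h
    rw [hLs] at h1
    simp [hpos] at h1
    simp [h1]
  let e : (ℝ × ℝ) ≃L[ℝ] (ℝ × ℝ) :=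
    (LinearEquiv.ofInjectiveEndo (L.prod (ContinuousLinearMap.snd ℝ ℝ ℝ)).toLinearMap
      hinj).toContinuousLinearEquiv
  have he : (e : (ℝ × ℝ) →L[ℝ] (ℝ × ℝ)) = L.prod (ContinuousLinearMap.snd ℝ ℝ ℝ) := by
    ext z <;> rfl
  have hFd' : HasFDerivAt F (e : (ℝ × ℝ) →L[ℝ] (ℝ × ℝ)) (x, t) := by rw [he]; exact hFd
  have hn : ((⊤ : ℕ∞) : WithTop ℕ∞) ≠ 0 := by simp
  have hG := hF.to_localInverse hFd' hn
  set G := hF.localInverse hFd' hn with hGdef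
  have hst : HasStrictFDerivAt F (e : (ℝ × ℝ) →L[ℝ] (ℝ × ℝ)) (x, t) :=
    hF.hasStrictFDerivAt' hFd' hn
  have hr : ∀ᶠ y in 𝓝 (F (x, t)), F (G y) = y := hst.eventually_right_inverse
  have hG0 : G (F (x, t)) = (x, t) := hst.localInverse_apply_image
  have hGS : ∀ᶠ y in 𝓝 (F (x, t)), G y ∈ S := by
    apply hG.continuousAt.eventually
    rw [hG0]; exact hS.mem_nhds hz
  refine ⟨?_, ?_⟩
  · have h1 : ContDiffAt ℝ (⊤ : ℕ∞) (fun y => (G y).1) (F (x, t)) :=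
      contDiffAt_fst.comp _ hG
    refine h1.congr_of_eventuallyEq ?_
    filter_upwards [hr, hGS] with y h1 h2
    have := hY _ h2
    change Y (F (G y)) = _ at this
    rwa [h1] at this
  · filter_upwards [hr, hGS] with y h1 h2
    exact ⟨G y, h2, h1⟩

/-- differentiated conjugate equation and Bäcklund relation,
Section 6.2 of Barenblatt–Vázquez. Let `u` be a smooth solution of
`u_t = (Φ(u_x))_x` with `∂ₓu > 0` on a product of open intervals `Ω = I × J`, with
inverse profiles `X(·,t)`. Set `w(p,t) = ∂_p X(p,t)` and `v(x,t) = ∂ₓu(x,t)`. Then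
`w` satisfies the differentiated conjugate equation `w_t = (Ψ(w))_{pp}` with
`Ψ(s) = −Φ(1/s)`, and the Bäcklund relation `v(x,t)·w(u(x,t),t) = 1` holds on `Ω`. -/
theorem differentiated_conjugate_and_backlund
    (Φ : ℝ → ℝ) (hΦsmooth : ContDiffOn ℝ (⊤ : ℕ∞) Φ (Ioi 0))
    (hΦ' : ∀ s : ℝ, 0 < s → 0 < deriv Φ s)
    (xa xb ta tb : ℝ)
    (u : ℝ → ℝ → ℝ)
    (hu_smooth : ContDiffOn ℝ (⊤ : ℕ∞) (fun p : ℝ × ℝ => u p.1 p.2)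
      (Ioo xa xb ×ˢ Ioo ta tb))
    (hu_mono : ∀ x ∈ Ioo xa xb, ∀ t ∈ Ioo ta tb, 0 < deriv (fun z => u z t) x)
    (hu_pde : ∀ x ∈ Ioo xa xb, ∀ t ∈ Ioo ta tb,
      deriv (fun s => u x s) t = deriv (fun y => Φ (deriv (fun z => u z t) y)) x)
    (X : ℝ → ℝ → ℝ)
    (hX_mem : ∀ t ∈ Ioo ta tb, ∀ p : ℝ, (∃ x ∈ Ioo xa xb, u x t = p) →
      X p t ∈ Ioo xa xb ∧ u (X p t) t = p)
    (hX_inv : ∀ t ∈ Ioo ta tb, ∀ x ∈ Ioo xa xb, X (u x t) t = x)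
    (w v : ℝ → ℝ → ℝ)
    (hw : ∀ p t : ℝ, w p t = deriv (fun q => X q t) p)
    (hv : ∀ x t : ℝ, v x t = deriv (fun z => u z t) x) :
    (∀ t ∈ Ioo ta tb, ∀ p : ℝ, (∃ x ∈ Ioo xa xb, u x t = p) →
      deriv (fun s => w p s) t =
        deriv (deriv (fun q => (fun s => -Φ (1 / s)) (w q t))) p) ∧
    ∀ x ∈ Ioo xa xb, ∀ t ∈ Ioo ta tb, v x t * w (u x t) t = 1 := by
  have hS : IsOpen (Ioo xa xb ×ˢ Ioo ta tb) := isOpen_Ioo.prod isOpen_Ioo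
  set S := Ioo xa xb ×ˢ Ioo ta tb with hSdef
  set U : ℝ × ℝ → ℝ := fun p => u p.1 p.2 with hU
  let Y : ℝ × ℝ → ℝ := fun p => X p.1 p.2
  have hUa : ∀ z ∈ S, ContDiffAt ℝ (⊤ : ℕ∞) U z := fun z hz =>
    hu_smooth.contDiffAt (hS.mem_nhds hz)
  have hUd : ∀ z ∈ S, DifferentiableAt ℝ U z := fun z hz => (hUa z hz).differentiableAt (by simp)
  have hux : ∀ x t, (x, t) ∈ S → HasDerivAt (fun z => u z t) (fderiv ℝ U (x, t) (1, 0)) x :=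
    fun x t h => aux_p1 (hUd _ h)
  have hut : ∀ x t, (x, t) ∈ S → HasDerivAt (fun s => u x s) (fderiv ℝ U (x, t) (0, 1)) t :=
    fun x t h => aux_p2 (hUd _ h)
  have hpos : ∀ x t, (x, t) ∈ S → 0 < fderiv ℝ U (x, t) (1, 0) := by
    intro x t h
    rw [← (hux x t h).deriv]; exact hu_mono x h.1 t h.2
  have hY : ∀ z ∈ S, Y (U z, z.2) = z.1 := fun z hz => hX_inv z.2 hz.2 z.1 hz.1
  have hinv : ∀ x t, (x, t) ∈ S → ContDiffAt ℝ (⊤ : ℕ∞) Y (u x t, t) ∧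
      ∀ᶠ y in 𝓝 (u x t, t), ∃ z ∈ S, (U z, z.2) = y := fun x t h =>
    aux_inv hS hu_smooth hY h (hpos x t h).ne'
  have hYd : ∀ x t, (x, t) ∈ S → DifferentiableAt ℝ Y (u x t, t) := fun x t h =>
    (hinv x t h).1.differentiableAt (by simp)
  have hUY : ∀ x t, (x, t) ∈ S → ∀ᶠ y in 𝓝 (u x t, t), U (Y y, y.2) = y.1 := by
    intro x t h
    filter_upwards [(hinv x t h).2] with y hy
    obtain ⟨z, hz, rfl⟩ := hy
    simp only [hY z hz]
  -- first derivatives of the inverse profiles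
  have hXq : ∀ x t, (x, t) ∈ S → HasDerivAt (fun q => X q t) (fderiv ℝ U (x, t) (1, 0))⁻¹
      (u x t) := by
    intro x t h
    have h1 : HasDerivAt (fun q => X q t) _ (u x t) := aux_p1 (hYd x t h)
    have hx : X (u x t) t = x := hX_inv t h.2 x h.1
    have h2 : HasDerivAt (fun z => u z t) (fderiv ℝ U (x, t) (1, 0)) (X (u x t) t) := by
      rw [hx]; exact hux x t h
    have h3 := h2.comp (u x t) h1
    have h4 : ((fun z => u z t) ∘ fun q => X q t) =ᶠ[𝓝 (u x t)] id := aux_t1 (hUY x t h)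
    have h5 := h3.unique ((hasDerivAt_id (u x t)).congr_of_eventuallyEq h4)
    rw [← eq_inv_of_mul_eq_one_right h5]
    exact h1
  have hXt : ∀ x t, (x, t) ∈ S → HasDerivAt (fun s => X (u x t) s)
      (-(fderiv ℝ U (x, t) (0, 1)) * (fderiv ℝ U (x, t) (1, 0))⁻¹) t := by
    intro x t h
    have h1 : HasDerivAt (fun s => X (u x t) s) _ t := aux_p2 (hYd x t h)
    set c := fderiv ℝ Y (u x t, t) (0, 1) with hc
    have hx : X (u x t) t = x := hX_inv t h.2 x h.1
    have h2 : HasFDerivAt U (fderiv ℝ U (x, t)) (X (u x t) t, t) := by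
      rw [hx]; exact (hUd _ h).hasFDerivAt
    have h3 := HasFDerivAt.comp_hasDerivAt (f := fun s => (X (u x t) s, id s)) t h2
      (h1.prodMk (hasDerivAt_id t))
    have h4 : (U ∘ fun s => (X (u x t) s, id s)) =ᶠ[𝓝 t] fun _ => u x t := aux_t2 (hUY x t h)
    have h5 := h3.unique ((hasDerivAt_const t (u x t)).congr_of_eventuallyEq h4)
    have h6 : ((c, 1) : ℝ × ℝ) = c • (1, 0) + (0, 1) := by ext <;> simp
    rw [h6, map_add, map_smul, smul_eq_mul] at h5
    have h7 : -(fderiv ℝ U (x, t) (0, 1)) * (fderiv ℝ U (x, t) (1, 0))⁻¹ = c := by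
      have := (hpos x t h).ne'
      field_simp
      linarith
    rw [h7]; exact h1
  have hwS : ∀ x t, (x, t) ∈ S → w (u x t) t = (fderiv ℝ U (x, t) (1, 0))⁻¹ := fun x t h => by
    rw [hw]; exact (hXq x t h).deriv
  refine ⟨?_, ?_⟩
  swap
  · intro x hx t ht
    rw [hwS x t ⟨hx, ht⟩, hv, (hux x t ⟨hx, ht⟩).deriv]
    exact mul_inv_cancel₀ (hpos x t ⟨hx, ht⟩).ne'
  rintro t ht p ⟨x, hx, rfl⟩
  have hev : ∀ y, (y, t) ∈ S → ∀ᶠ q in 𝓝 (u y t), ∃ z, (z, t) ∈ S ∧ u z t = q := by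
    intro y h
    have := aux_t1 (hinv y t h).2
    filter_upwards [this] with q hq
    obtain ⟨⟨z, s⟩, hz, h1⟩ := hq
    simp only [Prod.mk.injEq] at h1
    obtain ⟨h1, rfl⟩ := h1
    exact ⟨z, hz, h1⟩
  -- the conjugate equation
  have hconj : ∀ y, (y, t) ∈ S → deriv (fun q => (fun s => -Φ (1 / s)) (w q t)) (u y t) =
      deriv (fun s => X (u y t) s) t := by
    intro y h
    have e1 : (fun q => (fun s => -Φ (1 / s)) (w q t)) =ᶠ[𝓝 (u y t)]
        fun q => -Φ (deriv (fun z => u z t) (X q t)) := by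
      filter_upwards [hev y h] with q hq
      obtain ⟨z, hz, rfl⟩ := hq
      simp only [hwS z t hz, hX_inv t hz.2 z hz.1, (hux z t hz).deriv, one_div, inv_inv]
    have hdv : DifferentiableAt ℝ (fun z => deriv (fun z => u z t) z) y := by
      have e2 : (fun z => deriv (fun z => u z t) z) =ᶠ[𝓝 y]
          fun z => fderiv ℝ U (z, t) (1, 0) := by
        filter_upwards [aux_t1 (hS.mem_nhds h)] with z hz
        exact (hux z t hz).deriv
      refine DifferentiableAt.congr_of_eventuallyEq ?_ e2
      have hf : DifferentiableAt ℝ (fderiv ℝ U) (y, t) :=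
        ((hUa _ h).fderiv_right (m := 1) (by rw [one_add_one_eq_two]; exact aux_le)).differentiableAt (by simp)
      have a2 : HasDerivAt (fun q => fderiv ℝ U (q, t)) (fderiv ℝ (fderiv ℝ U) (y, t) (1, 0)) y :=
        hf.hasFDerivAt.comp_hasDerivAt y ((hasDerivAt_id y).prodMk (hasDerivAt_const y t))
      exact (a2.clm_apply (hasDerivAt_const y ((1 : ℝ), (0 : ℝ)))).differentiableAt
    have hΦd : DifferentiableAt ℝ Φ (deriv (fun z => u z t) y) :=
      (hΦsmooth.contDiffAt (Ioi_mem_nhds (hu_mono y h.1 t h.2))).differentiableAt (by simp)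
    have hcomp : DifferentiableAt ℝ (fun y => Φ (deriv (fun z => u z t) y)) y :=
      DifferentiableAt.comp y hΦd hdv
    have h1 := hcomp.hasDerivAt
    rw [← hu_pde y h.1 t h.2, (hut y t h).deriv] at h1
    have hx : X (u y t) t = y := hX_inv t h.2 y h.1
    have h2 : HasDerivAt (fun y => Φ (deriv (fun z => u z t) y)) (fderiv ℝ U (y, t) (0, 1))
        (X (u y t) t) := by rw [hx]; exact h1
    have h3 := (h2.comp (u y t) (hXq y t h)).neg
    rw [e1.deriv_eq, (hXt y t h).deriv, neg_mul]
    exact h3.deriv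
  have e3 : deriv (fun q => (fun s => -Φ (1 / s)) (w q t)) =ᶠ[𝓝 (u x t)]
      fun q => deriv (fun s => X q s) t := by
    filter_upwards [hev x ⟨hx, ht⟩] with q hq
    obtain ⟨z, hz, rfl⟩ := hq
    exact hconj z hz
  rw [e3.deriv_eq]
  simp only [hw]
  exact aux_symm (hinv x t ⟨hx, ht⟩).1
end

section
/- Let α > 0, q = 1 + 2α, K > 0, x₀ ∈ ℝ, t₀ > 0, and let F : (−K,K) → ℝ be C² with F' > 0 and F''(ξ) = (1/(2α)) ξ (F'(ξ))^{2+q} for all ξ ∈ (−K,K). Define u(x,t) = F((x−x₀)(t+t₀)^{1/(2α)}) on the shrinking strip S = {(x,t) : t > 0, |x−x₀| < K (t+t₀)^{−1/(2α)}}. Then u is a solution of the reduced equation ∂_t u = (∂ₓu)^{−2(1+α)} ∂ₓ²u on S, and its gradient satisfies ∂ₓu(x,t) = (t+t₀)^{1/(2α)} F'((x−x₀)(t+t₀)^{1/(2α)}), which diverges like t^{1/(2α)} as t → ∞. -/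
open Set Filter Topology

/-- self-similar solutions of the reduced equation, Sections 2 and 8
of Barenblatt–Vázquez. Let `α > 0`, `q = 1 + 2α`, `K > 0`, `t₀ > 0`, and let `F` be a
`C²` profile on `(−K,K)` with `F' > 0` solving `F''(ξ) = (1/(2α)) ξ (F'(ξ))^{2+q}`.
Then `u(x,t) = F((x−x₀)(t+t₀)^{1/(2α)})`, defined on the shrinking strip
`|x−x₀| < K (t+t₀)^{−1/(2α)}`, `t > 0`, solves the reduced equation
`u_t = (u_x)^{−2(1+α)} u_{xx}`, and its gradient is
`∂ₓu(x,t) = (t+t₀)^{1/(2α)} F'((x−x₀)(t+t₀)^{1/(2α)})`, diverging like `t^{1/(2α)}`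
as `t → ∞`. -/
theorem selfSimilar_solution_reduced_equation
    (α q K x₀ t₀ : ℝ) (hα : 0 < α) (hq : q = 1 + 2 * α) (hK : 0 < K) (ht₀ : 0 < t₀)
    (F F' F'' : ℝ → ℝ)
    (hF' : ∀ ξ ∈ Ioo (-K) K, HasDerivAt F (F' ξ) ξ)
    (hF'' : ∀ ξ ∈ Ioo (-K) K, HasDerivAt F' (F'' ξ) ξ)
    (hF'pos : ∀ ξ ∈ Ioo (-K) K, 0 < F' ξ)
    (hODE : ∀ ξ ∈ Ioo (-K) K, F'' ξ = 1 / (2 * α) * ξ * F' ξ ^ (2 + q))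
    (u : ℝ → ℝ → ℝ)
    (hu : ∀ x t : ℝ, u x t = F ((x - x₀) * (t + t₀) ^ (1 / (2 * α)))) :
    ∀ x t : ℝ, 0 < t → |x - x₀| < K * (t + t₀) ^ (-(1 / (2 * α))) →
      deriv (fun s => u x s) t =
        deriv (fun y => u y t) x ^ (-(2 * (1 + α))) * deriv (deriv (fun y => u y t)) x ∧
      deriv (fun y => u y t) x =
        (t + t₀) ^ (1 / (2 * α)) * F' ((x - x₀) * (t + t₀) ^ (1 / (2 * α))) := by
  intro x t ht hx
  set c : ℝ := 1 / (2 * α) with hc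
  have hT : 0 < t + t₀ := by positivity
  have hcα : 2 * c * α = 1 := by rw [hc]; field_simp
  set P : ℝ := (t + t₀) ^ c with hP
  have hPpos : 0 < P := Real.rpow_pos_of_pos hT c
  have hmem : ∀ y : ℝ, |y - x₀| < K * (t + t₀) ^ (-c) → (y - x₀) * P ∈ Ioo (-K) K := by
    intro y hy
    rw [Real.rpow_neg hT.le, ← hP, ← div_eq_mul_inv, lt_div_iff₀ hPpos] at hy
    have h2 : |(y - x₀) * P| < K := by rwa [abs_mul, abs_of_pos hPpos]
    exact abs_lt.mp h2
  have hlin : ∀ y : ℝ, HasDerivAt (fun y : ℝ => (y - x₀) * P) P y := by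
    intro y
    simpa using ((hasDerivAt_id y).sub_const x₀).mul_const P
  have hux : ∀ y : ℝ, |y - x₀| < K * (t + t₀) ^ (-c) →
      deriv (fun y => u y t) y = P * F' ((y - x₀) * P) := by
    intro y hy
    have h := (hF' _ (hmem y hy)).comp y (hlin y)
    have he : (fun y => u y t) = F ∘ (fun y : ℝ => (y - x₀) * P) := by
      funext z
      exact hu z t
    rw [he, h.deriv, mul_comm]
  refine ⟨?_, hux x hx⟩
  have huxx : deriv (deriv (fun y => u y t)) x = P * (F'' ((x - x₀) * P) * P) := by
    have hev : deriv (fun y => u y t) =ᶠ[𝓝 x] fun y => P * F' ((y - x₀) * P) := by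
      have hopen : IsOpen {y : ℝ | |y - x₀| < K * (t + t₀) ^ (-c)} :=
        isOpen_lt (by fun_prop) continuous_const
      filter_upwards [hopen.mem_nhds hx] with y hy
      exact hux y hy
    rw [hev.deriv_eq]
    exact (((hF'' _ (hmem x hx)).comp x (hlin x)).const_mul P).deriv
  have hut : deriv (fun s => u x s) t =
      F' ((x - x₀) * P) * ((x - x₀) * (c * (t + t₀) ^ (c - 1))) := by
    have h1 : HasDerivAt (fun s : ℝ => (x - x₀) * (s + t₀) ^ c)
        ((x - x₀) * (c * (t + t₀) ^ (c - 1))) t := by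
      have h2 := ((hasDerivAt_id t).add_const t₀).rpow_const (p := c) (Or.inl hT.ne')
      simpa using h2.const_mul (x - x₀)
    have h := HasDerivAt.comp t (hF' _ (hmem x hx)) h1
    have he : (fun s => u x s) = F ∘ (fun s : ℝ => (x - x₀) * (s + t₀) ^ c) := by
      funext s
      exact hu x s
    rw [he, h.deriv]
  rw [hut, huxx, hux x hx, hODE _ (hmem x hx), hq]
  have hG := hF'pos _ (hmem x hx)
  set G := F' ((x - x₀) * P)
  rw [Real.mul_rpow hPpos.le hG.le]
  have e1 : G ^ (-(2 * (1 + α))) * G ^ (2 + (1 + 2 * α)) = G := by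
    rw [← Real.rpow_add hG]
    ring_nf
    exact Real.rpow_one G
  have e2 : P ^ (-(2 * (1 + α))) * P * P * P = (t + t₀) ^ (c - 1) := by
    rw [hP, ← Real.rpow_mul hT.le, ← Real.rpow_add hT, ← Real.rpow_add hT, ← Real.rpow_add hT]
    congr 1
    linarith
  rw [← e2]
  linear_combination (-(P ^ (-(2 * (1 + α))) * P * P * P * c * (x - x₀))) * e1
end

section
/- Let Φ : (0,∞) → ℝ be C¹ with Φ'(s) > 0 for all s > 0, and let c > 0 and V > 0. Then the following are equivalent: (i) the integral ∫₀^V Φ'(s)/s ds is finite; (ii) there exist δ > 0 and a continuous function f : [0,δ) → [0,∞) with f(0) = 0, f > 0 and differentiable on (0,δ), satisfying the traveling wave equation Φ'(f(ξ)) f'(ξ) = c f(ξ) on (0,δ). (The function v(x,t) = f(ct − x) for ct − x > 0, extended by 0, is then a traveling wave solution of v_t = (Φ(v))_{xx} with a sharp finite interface at x = ct.) -/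
open Set Filter Topology

open Set Filter Topology MeasureTheory in
theorem icw_forward (Φ : ℝ → ℝ) (c V : ℝ) (hc : 0 < c) (hV : 0 < V)
    (hΦ' : ∀ s : ℝ, 0 < s → 0 < deriv Φ s)
    (hg : ContinuousOn (fun s => deriv Φ s / s) (Ioi 0))
    (hI : IntegrableOn (fun s => deriv Φ s / s) (Ioo 0 V)) :
      ∃ δ : ℝ, 0 < δ ∧ ∃ f : ℝ → ℝ,
        ContinuousOn f (Ico 0 δ) ∧ f 0 = 0 ∧
        (∀ ξ ∈ Ioo (0:ℝ) δ, 0 < f ξ) ∧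
        DifferentiableOn ℝ f (Ioo 0 δ) ∧
        ∀ ξ ∈ Ioo (0:ℝ) δ, deriv Φ (f ξ) * deriv f ξ = c * f ξ := by
  set g : ℝ → ℝ := fun s => deriv Φ s / s with hgdef
  have gpos : ∀ s, 0 < s → 0 < g s := fun s hs => div_pos (hΦ' s hs) hs
  have hII : IntervalIntegrable g volume 0 V := by
    rw [intervalIntegrable_iff_integrableOn_Ioo_of_le hV.le]; exact hI
  have hsub : ∀ x ∈ Icc 0 V, ∀ y ∈ Icc 0 V, IntervalIntegrable g volume x y := by
    intro x hx y hy
    apply hII.mono_set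
    rw [uIcc_of_le hV.le]
    exact uIcc_subset_Icc hx hy
  have h0 : (0:ℝ) ∈ Icc 0 V := ⟨le_rfl, hV.le⟩
  have hVm : V ∈ Icc 0 V := ⟨hV.le, le_rfl⟩
  set G : ℝ → ℝ := fun x => ∫ s in (0:ℝ)..x, g s with hG
  have Gmono : StrictMonoOn G (Icc 0 V) := by
    intro x hx y hy hxy
    have h1 := intervalIntegral.integral_add_adjacent_intervals (hsub 0 h0 x hx) (hsub x hx y hy)
    have h2 : 0 < ∫ s in x..y, g s :=
      intervalIntegral.intervalIntegral_pos_of_pos_on (hsub x hx y hy)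
        (fun s hs => gpos s (hx.1.trans_lt hs.1)) hxy
    simp only [hG]; linarith
  have Gcont : ContinuousOn G (Icc 0 V) := by
    have := intervalIntegral.continuousOn_primitive_interval (a := 0) (b := V) (f := g)
      (μ := volume) (by
        rw [uIcc_of_le hV.le, integrableOn_Icc_iff_integrableOn_Ioo]; exact hI)
    rwa [uIcc_of_le hV.le] at this
  have G0 : G 0 = 0 := by simp [hG]
  have GV : 0 < G V := by have := Gmono h0 hVm hV; rwa [G0] at this
  have Gder : ∀ x ∈ Ioo 0 V, HasDerivAt G (g x) x := by
    intro x hx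
    apply intervalIntegral.integral_hasDerivAt_right (hsub 0 h0 x ⟨hx.1.le, hx.2.le⟩)
    · exact hg.stronglyMeasurableAtFilter isOpen_Ioi x hx.1
    · exact hg.continuousAt (Ioi_mem_nhds hx.1)
  set p : ℝ → ℝ := fun x => max 0 (min V x) with hp
  have pm : ∀ x, p x ∈ Icc 0 V := fun x => ⟨le_max_left _ _, max_le hV.le (min_le_left _ _)⟩
  have pe : ∀ x ∈ Icc 0 V, p x = x := by
    intro x hx; simp [hp, hx.1, hx.2]
  have pmono : Monotone p := by
    intro x y h; simp only [hp]; gcongr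
  have qmono : ∀ x y, x ≤ y → x - p x ≤ y - p y := by
    intro x y h; simp only [hp]; clear * - hV h; grind
  set H : ℝ → ℝ := fun x => G (p x) + (x - p x) with hH
  have pc : Continuous p := by fun_prop
  have Hc : Continuous H := by
    have : Continuous (fun x => G (p x)) := Gcont.comp_continuous pc pm
    exact this.add (continuous_id.sub pc)
  have Hm : StrictMono H := by
    intro x y hxy
    have h1 := qmono x y hxy.le
    rcases (pmono hxy.le).lt_or_eq with h | h
    · have := Gmono (pm x) (pm y) h
      simp only [hH]; linarith
    · simp only [hH, h]; linarith
  have GB : ∀ x, 0 ≤ G (p x) ∧ G (p x) ≤ G V := fun x =>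
    ⟨by rw [← G0]; exact Gmono.monotoneOn h0 (pm x) (pm x).1,
      Gmono.monotoneOn (pm x) hVm (pm x).2⟩
  have Hs : Function.Surjective H := by
    apply Hc.surjective
    · apply tendsto_atTop_mono (f := fun x => x + (-V)) _ (tendsto_atTop_add_const_right _ _ tendsto_id)
      intro x
      have := GB x; have := pm x
      simp only [hH]; linarith [this.2, (GB x).1]
    · refine tendsto_atBot_mono ?_ (tendsto_atBot_add_const_right _ (G V) tendsto_id)
      intro x
      change H x ≤ x + G V
      simp only [hH]; linarith [(pm x).1, (GB x).2]
  set e := (Hm.orderIsoOfSurjective H Hs) with he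
  have ee : ∀ x, e x = H x := fun x => rfl
  have HG : ∀ x ∈ Icc 0 V, H x = G x := by
    intro x hx; simp [hH, pe x hx]
  have es : ∀ y, H (e.symm y) = y := fun y => by rw [← ee]; simp
  have ec : Continuous e.symm := e.symm.continuous
  have e0 : e.symm 0 = 0 := by
    apply Hm.injective; rw [es, HG 0 h0, G0]
  have eV : e.symm (G V) = V := by
    apply Hm.injective; rw [es, HG V hVm]
  have key : ∀ ξ ∈ Ioo 0 (G V / c), e.symm (c * ξ) ∈ Ioo 0 V ∧
      HasDerivAt (fun ξ => e.symm (c * ξ)) ((g (e.symm (c * ξ)))⁻¹ * c) ξ := by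
    intro ξ hξ
    have hm : e.symm (c * ξ) ∈ Ioo 0 V := by
      constructor
      · rw [← e0]; exact e.symm.strictMono (mul_pos hc hξ.1)
      · conv_rhs => rw [← eV]
        apply e.symm.strictMono
        have := hξ.2
        rw [lt_div_iff₀ hc] at this; linarith
    refine ⟨hm, ?_⟩
    have hd : HasDerivAt H (g (e.symm (c * ξ))) (e.symm (c * ξ)) := by
      apply (Gder _ hm).congr_of_eventuallyEq
      filter_upwards [Ioo_mem_nhds hm.1 hm.2] with x hx
      exact HG x ⟨hx.1.le, hx.2.le⟩
    have h1 : HasDerivAt e.symm (g (e.symm (c * ξ)))⁻¹ (c * ξ) :=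
      HasDerivAt.of_local_left_inverse ec.continuousAt hd (gpos _ hm.1).ne'
        (Eventually.of_forall es)
    have h2 : HasDerivAt (fun ξ : ℝ => c * ξ) c ξ := by
      simpa using (hasDerivAt_id ξ).const_mul c
    exact h1.comp ξ h2
  refine ⟨G V / c, div_pos GV hc, fun ξ => e.symm (c * ξ), ?_, ?_, ?_, ?_, ?_⟩
  · exact (ec.comp (continuous_const.mul continuous_id)).continuousOn
  · simpa using e0
  · exact fun ξ hξ => (key ξ hξ).1.1
  · exact fun ξ hξ => (key ξ hξ).2.differentiableAt.differentiableWithinAt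
  · intro ξ hξ
    have hx := (key ξ hξ).1.1
    rw [(key ξ hξ).2.deriv]
    have := hΦ' _ hx
    simp only [hgdef]
    field_simp

open Set Filter Topology MeasureTheory in
theorem icw_backward (Φ : ℝ → ℝ) (c V : ℝ) (hc : 0 < c)
    (hΦ' : ∀ s : ℝ, 0 < s → 0 < deriv Φ s)
    (hg : ContinuousOn (fun s => deriv Φ s / s) (Ioi 0))
    (δ : ℝ) (hδ : 0 < δ) (f : ℝ → ℝ) (fc : ContinuousOn f (Ico 0 δ)) (f0 : f 0 = 0)
    (fp : ∀ ξ ∈ Ioo (0:ℝ) δ, 0 < f ξ) (fd : DifferentiableOn ℝ f (Ioo 0 δ))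
    (ode : ∀ ξ ∈ Ioo (0:ℝ) δ, deriv Φ (f ξ) * deriv f ξ = c * f ξ) :
    IntegrableOn (fun s => deriv Φ s / s) (Ioo 0 V) := by
  set g : ℝ → ℝ := fun s => deriv Φ s / s with hgdef
  have gpos : ∀ s, 0 < s → 0 < g s := fun s hs => div_pos (hΦ' s hs) hs
  set b := δ / 2 with hb
  have hbm : b ∈ Ioo 0 δ := ⟨by positivity, by linarith⟩
  have hB := fp b hbm
  have hII : ∀ x y, 0 < x → 0 < y → IntervalIntegrable g volume x y := by
    intro x y hx hy
    apply ContinuousOn.intervalIntegrable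
    apply hg.mono
    intro z hz
    exact (lt_min hx hy).trans_le hz.1
  have hder : ∀ ξ ∈ Ioo 0 δ, HasDerivAt (fun ξ => (∫ s in (f b)..(f ξ), g s) - c * ξ) 0 ξ := by
    intro ξ hξ
    have hx := fp ξ hξ
    have h1 : HasDerivAt (fun x => ∫ s in (f b)..x, g s) (g (f ξ)) (f ξ) := by
      apply intervalIntegral.integral_hasDerivAt_right (hII _ _ hB hx)
      · exact hg.stronglyMeasurableAtFilter isOpen_Ioi _ hx
      · exact hg.continuousAt (Ioi_mem_nhds hx)
    have h2 : HasDerivAt f (deriv f ξ) ξ :=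
      (fd.differentiableAt (Ioo_mem_nhds hξ.1 hξ.2)).hasDerivAt
    have h3 := (h1.comp ξ h2).sub ((hasDerivAt_id ξ).const_mul c)
    have h4 : g (f ξ) * deriv f ξ - c * 1 = 0 := by
      have := ode ξ hξ
      simp only [hgdef]
      field_simp
      linarith
    rw [h4] at h3
    exact h3
  have hconst : ∀ ξ ∈ Ioo 0 δ, (∫ s in (f b)..(f ξ), g s) = c * ξ - c * b := by
    intro ξ hξ
    have := isOpen_Ioo.is_const_of_deriv_eq_zero isPreconnected_Ioo
      (fun x hx => (hder x hx).differentiableAt.differentiableWithinAt)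
      (fun x hx => (hder x hx).deriv) hξ hbm
    simp only [intervalIntegral.integral_same] at this
    linarith
  have hI1 : IntegrableOn g (Ioc 0 (f b)) := by
    have um : ∀ n : ℕ, b / (n + 1) ∈ Ioo 0 δ := fun n =>
      ⟨div_pos hbm.1 (by positivity), (div_le_self hbm.1.le (by linarith [n.cast_nonneg (α := ℝ)])).trans_lt hbm.2⟩
    have ub : ∀ n : ℕ, b / (n + 1) ≤ b := fun n =>
      div_le_self hbm.1.le (by linarith [n.cast_nonneg (α := ℝ)])
    have ut : Tendsto (fun n : ℕ => b / ((n:ℝ) + 1)) atTop (𝓝 0) :=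
      tendsto_const_nhds.div_atTop (tendsto_atTop_add_const_right _ _ tendsto_natCast_atTop_atTop)
    have fle : ∀ n : ℕ, f (b / (n + 1)) ≤ f b := by
      intro n
      by_contra hlt
      push Not at hlt
      have h1 := hconst _ (um n)
      have h2 := intervalIntegral.intervalIntegral_pos_of_pos_on (hII _ _ hB (fp _ (um n)))
        (fun s hs => gpos s (hB.trans hs.1)) hlt
      have := mul_le_mul_of_nonneg_left (ub n) hc.le
      linarith
    apply integrableOn_Ioc_of_intervalIntegral_norm_bounded_left (l := atTop) (I := c * b)
      (a := fun n : ℕ => f (b / (n + 1)))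
    · intro n
      exact (intervalIntegrable_iff_integrableOn_Ioc_of_le (fle n)).1 (hII _ _ (fp _ (um n)) hB)
    · have h := (fc 0 ⟨le_rfl, hδ⟩).tendsto
      rw [f0] at h
      apply h.comp
      rw [tendsto_nhdsWithin_iff]
      exact ⟨ut, Eventually.of_forall fun n => ⟨(um n).1.le, (um n).2⟩⟩
    · apply Eventually.of_forall
      intro n
      have h1 : ∫ s in Ioc (f (b / (n + 1))) (f b), ‖g s‖ = ∫ s in Ioc (f (b / (n + 1))) (f b), g s := by
        apply setIntegral_congr_fun measurableSet_Ioc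
        intro s hs
        exact Real.norm_of_nonneg (gpos s ((fp _ (um n)).trans hs.1)).le
      have h2 := hconst _ (um n)
      rw [intervalIntegral.integral_symm, intervalIntegral.integral_of_le (fle n)] at h2
      have h3 := mul_pos hc (um n).1
      rw [h1]
      linarith
  have hI2 : IntegrableOn g (Icc (f b) V) := by
    apply ContinuousOn.integrableOn_Icc
    exact hg.mono fun z hz => hB.trans_le hz.1
  apply (hI1.union hI2).mono_set
  intro x hx
  rcases le_total x (f b) with h | h
  · exact Or.inl ⟨hx.1, h⟩
  · exact Or.inr ⟨h, hx.2.le⟩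

/-- the Oleinik–Kalashnikov–Chzhou interface criterion, Section 5.4
of Barenblatt–Vázquez. For `Φ : (0,∞) → ℝ` of class `C¹` with `Φ' > 0`, and any
wave speed `c > 0` and level `V > 0`, the integral `∫₀^V Φ'(s)/s ds` is finite if and
only if there is a nontrivial traveling wave front profile: a continuous function
`f ≥ 0` on `[0,δ)` with `f(0) = 0`, positive and differentiable on `(0,δ)`, solving
`Φ'(f(ξ)) f'(ξ) = c f(ξ)` on `(0,δ)`. (Then `v(x,t) = f(ct−x)`, extended by `0`, is
a traveling wave solution of `v_t = (Φ(v))_{xx}` with a sharp interface at `x = ct`.) -/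
theorem interface_criterion_traveling_waves
    (Φ : ℝ → ℝ) (hΦsmooth : ContDiffOn ℝ 1 Φ (Ioi 0))
    (hΦ' : ∀ s : ℝ, 0 < s → 0 < deriv Φ s)
    (c V : ℝ) (hc : 0 < c) (hV : 0 < V) :
    MeasureTheory.IntegrableOn (fun s => deriv Φ s / s) (Ioo 0 V) ↔
      ∃ δ : ℝ, 0 < δ ∧ ∃ f : ℝ → ℝ,
        ContinuousOn f (Ico 0 δ) ∧ f 0 = 0 ∧
        (∀ ξ ∈ Ioo (0:ℝ) δ, 0 < f ξ) ∧
        DifferentiableOn ℝ f (Ioo 0 δ) ∧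
        ∀ ξ ∈ Ioo (0:ℝ) δ, deriv Φ (f ξ) * deriv f ξ = c * f ξ := by
  have hg : ContinuousOn (fun s => deriv Φ s / s) (Ioi 0) :=
    (hΦsmooth.continuousOn_deriv_of_isOpen isOpen_Ioi le_rfl).div continuousOn_id
      (fun x hx => ne_of_gt hx)
  constructor
  · exact icw_forward Φ c V hc hV hΦ' hg
  · rintro ⟨δ, hδ, f, h1, h2, h3, h4, h5⟩
    exact icw_backward Φ c V hc hΦ' hg δ hδ f h1 h2 h3 h4 h5
end
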